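/- arXiv:2409.14253 — 3 statements merged into one kernel-verified Lean document; each statement's English description precedes it below -/
import Mathlib

section
/- There exists an infinite family (f_i)_{i ∈ ℕ} of functions from the positive integers to ℚ that is linearly independent over ℂ (as elements of the space of functions from the positive integers to ℂ) such that: each f_i has the form f_i(n) = Σ_{|𝐚| ≤ d_i} c_{𝐚} · M_{𝐚}(n), a finite linear combination with integer coefficients c_{𝐚} over vectors 𝐚 of positive integers with |𝐚| ≤ d_i for some d_i ≥ 21; and for every i and every integer n ≥ 2, f_i(n) = 0 if and only if n = p³ for some prime p. -/
/-- The weight `|𝐚|` of a vector of positive integers: the sum of its entries. -/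
def weight (v : List ℕ+) : ℕ := (v.map fun x => (x : ℕ)).sum

/-- The MacMahonesque partition function `M_{𝐚}(n)`: the sum of
`m₁^{v₁} ⋯ m_a^{v_a}` over all `0 < s₁ < ⋯ < s_a` and positive integers `m₁, …, m_a`
with `n = m₁s₁ + ⋯ + m_a s_a`.  (Any such `sᵢ, mᵢ` lie in `[1, n]`, so the sum below
ranges over all solutions.) -/
def macM (v : List ℕ+) (n : ℕ) : ℕ :=
  ∑ sm ∈ Fintype.piFinset fun _ : Fin v.length => Finset.Icc 1 n ×ˢ Finset.Icc 1 n,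
    if (∀ i j : Fin v.length, i < j → (sm i).1 < (sm j).1) ∧
        n = ∑ i : Fin v.length, (sm i).2 * (sm i).1 then
      ∏ i : Fin v.length, (sm i).2 ^ (v.get i : ℕ)
    else 0



/-- The polynomials without constant term, as functions on `ℕ`. -/
noncomputable def polyZero : Submodule ℚ (ℕ → ℚ) :=
  Submodule.span ℚ (Set.range fun u : ℕ+ => fun m : ℕ => (m : ℚ) ^ (u : ℕ))

theorem pow_mem_polyZero (u : ℕ) (hu : 1 ≤ u) : (fun m : ℕ => (m : ℚ) ^ u) ∈ polyZero :=
  Submodule.subset_span ⟨⟨u, hu⟩, rfl⟩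

theorem powSum_mem_polyZero (j r : ℕ) (hr : 1 ≤ r) :
    (fun m : ℕ => (m : ℚ) ^ j * ∑ i ∈ Finset.range (m + 1), (i : ℚ) ^ r) ∈ polyZero := by
  have : (fun m : ℕ => (m : ℚ) ^ j * ∑ i ∈ Finset.range (m + 1), (i : ℚ) ^ r) =
      (fun m : ℕ => (m : ℚ) ^ (j + r)) + ∑ i ∈ Finset.range (r + 1),
        (bernoulli i * ((r + 1).choose i) / (r + 1)) •
          (fun m : ℕ => (m : ℚ) ^ (j + (r + 1 - i))) := by
    funext m
    rw [Finset.sum_range_succ, sum_range_pow]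
    simp only [Pi.add_apply, Finset.sum_apply, Pi.smul_apply, smul_eq_mul]
    rw [mul_add, Finset.mul_sum, add_comm, pow_add]
    congr 1
    refine Finset.sum_congr rfl fun i _ => ?_
    rw [pow_add]; ring
  rw [this]
  refine Submodule.add_mem _ (pow_mem_polyZero _ (by omega)) (Submodule.sum_mem _ fun i hi => ?_)
  refine Submodule.smul_mem _ _ (pow_mem_polyZero _ ?_)
  have := Finset.mem_range.1 hi
  omega

theorem conv_mem_polyZero (v w : ℕ) (hv : 1 ≤ v) :
    (fun m : ℕ => ∑ x ∈ Finset.HasAntidiagonal.antidiagonal m, (x.1 : ℚ) ^ v * (x.2 : ℚ) ^ w) ∈ polyZero := by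
  have : (fun m : ℕ => ∑ x ∈ Finset.HasAntidiagonal.antidiagonal m, (x.1 : ℚ) ^ v * (x.2 : ℚ) ^ w) =
      ∑ j ∈ Finset.range (w + 1), ((-1) ^ (w - j) * (w.choose j : ℚ)) •
        (fun m : ℕ => (m : ℚ) ^ j * ∑ i ∈ Finset.range (m + 1), (i : ℚ) ^ (v + (w - j))) := by
    funext m
    simp only [Finset.sum_apply, Pi.smul_apply, smul_eq_mul, Finset.mul_sum]
    rw [Finset.sum_comm, Finset.Nat.sum_antidiagonal_eq_sum_range_succ
      (fun a b : ℕ => (a : ℚ) ^ v * (b : ℚ) ^ w)]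
    refine Finset.sum_congr rfl fun i hi => ?_
    have hi' : i ≤ m := by have := Finset.mem_range.1 hi; omega
    rw [Nat.cast_sub hi', sub_eq_add_neg, add_pow, Finset.mul_sum]
    refine Finset.sum_congr rfl fun j _ => ?_
    rw [neg_pow, pow_add]; ring
  rw [this]
  refine Submodule.sum_mem _ fun j _ => Submodule.smul_mem _ _ (powSum_mem_polyZero _ _ (by omega))

/-- `∑ m^v q^{ms}`. -/
noncomputable def Lser (v s : ℕ) : PowerSeries ℚ :=
  PowerSeries.mk fun k => if s ∣ k then ((k / s : ℕ) : ℚ) ^ v else 0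

theorem Lser_eq (v s : ℕ) (hs : s ≠ 0) :
    Lser v s = PowerSeries.expand s hs (PowerSeries.mk fun k => (k : ℚ) ^ v) := by
  ext k
  rw [Lser, PowerSeries.coeff_mk]
  split_ifs with h
  · obtain ⟨m, rfl⟩ := h
    rw [PowerSeries.coeff_expand_mul, PowerSeries.coeff_mk, Nat.mul_div_cancel_left _ (by omega)]
  · rw [PowerSeries.coeff_expand_of_not_dvd _ _ _ h]

/-- mk as a linear map -/
noncomputable def mkLin : (ℕ → ℚ) →ₗ[ℚ] PowerSeries ℚ where
  toFun f := PowerSeries.mk f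
  map_add' f g := by ext; simp
  map_smul' c f := by ext; simp

abbrev EE := ℕ → ℕ → PowerSeries ℚ

/-- The iterated summation operator. -/
noncomputable def Jop (f : ℕ → ℚ) (g : EE) : EE := fun B a =>
  ∑ s ∈ Finset.Ioc a B, (if hs : s ≠ 0 then PowerSeries.expand s hs (PowerSeries.mk f) else 0) * g B s

noncomputable def Jlin : (ℕ → ℚ) →ₗ[ℚ] EE →ₗ[ℚ] EE :=
  LinearMap.mk₂ ℚ Jop
    (by
      intro f f' g
      funext B a
      simp only [Jop, Pi.add_apply, ← Finset.sum_add_distrib]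
      refine Finset.sum_congr rfl fun s _ => ?_
      have : PowerSeries.mk (f + f') = PowerSeries.mk f + PowerSeries.mk f' := mkLin.map_add f f'
      split_ifs <;> simp [this, add_mul])
    (by
      intro c f g
      funext B a
      simp only [Jop, Pi.smul_apply, Finset.smul_sum]
      refine Finset.sum_congr rfl fun s _ => ?_
      have : PowerSeries.mk (c • f) = c • PowerSeries.mk f := mkLin.map_smul c f
      split_ifs <;> simp [this])
    (by
      intro f g g'
      funext B a
      simp only [Jop, Pi.add_apply, ← Finset.sum_add_distrib, mul_add])
    (by
      intro c f g
      funext B a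
      simp only [Jop, Pi.smul_apply, Finset.smul_sum, mul_smul_comm])

theorem Jlin_apply (f : ℕ → ℚ) (g : EE) : Jlin f g = Jop f g := rfl

/-- Truncated generating functions of the MacMahonesque functions. -/
noncomputable def TT : List ℕ+ → EE
  | [] => 1
  | v :: l => Jlin (fun m : ℕ => (m : ℚ) ^ (v : ℕ)) (TT l)

noncomputable def VV : Submodule ℚ EE := Submodule.span ℚ (Set.range TT)

theorem Jlin_mem (f : ℕ → ℚ) (hf : f ∈ polyZero) (g : EE) (hg : g ∈ VV) : Jlin f g ∈ VV := by
  induction hf using Submodule.span_induction with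
  | mem f hf =>
    obtain ⟨u, rfl⟩ := hf
    induction hg using Submodule.span_induction with
    | mem g hg =>
      obtain ⟨l, rfl⟩ := hg
      exact Submodule.subset_span ⟨u :: l, rfl⟩
    | zero => simp
    | add x y _ _ hx hy => rw [map_add]; exact Submodule.add_mem _ hx hy
    | smul c x _ hx => rw [map_smul]; exact Submodule.smul_mem _ _ hx
  | zero => simp
  | add x y _ _ hx hy => rw [map_add]; exact Submodule.add_mem _ hx hy
  | smul c x _ hx => rw [map_smul]; exact Submodule.smul_mem _ _ hx

/-- discrete product rule -/
theorem sum_Ioc_mul {R : Type*} [CommRing R] (p w : ℕ → R) (B a : ℕ) :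
    (∑ s ∈ Finset.Ioc a B, p s) * (∑ s ∈ Finset.Ioc a B, w s) =
      ∑ s ∈ Finset.Ioc a B, (p s * ∑ t ∈ Finset.Ioc s B, w t) +
      ∑ s ∈ Finset.Ioc a B, (w s * ∑ t ∈ Finset.Ioc s B, p t) +
      ∑ s ∈ Finset.Ioc a B, p s * w s := by
  obtain h | h := le_total B a
  · simp [Finset.Ioc_eq_empty_of_le h]
  · induction h using Nat.decreasingInduction with
    | self => simp
    | of_succ a ha ih =>
      have h1 : Finset.Ioc a B = insert (a + 1) (Finset.Ioc (a + 1) B) := by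
        ext x; simp; omega
      have h2 : a + 1 ∉ Finset.Ioc (a + 1) B := by simp
      rw [h1]
      simp only [Finset.sum_insert h2]
      linear_combination ih

theorem Jop_mul (f f' : ℕ → ℚ) (g g' : EE) :
    Jlin f g * Jlin f' g' = Jlin f (g * Jlin f' g') + Jlin f' (Jlin f g * g') +
      Jlin (fun m => ∑ x ∈ Finset.HasAntidiagonal.antidiagonal m, f x.1 * f' x.2) (g * g') := by
  funext B a
  simp only [Jlin_apply, Pi.add_apply, Pi.mul_apply]
  simp only [Jop, Pi.mul_apply]
  rw [sum_Ioc_mul]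
  congr 1
  · congr 1
    · refine Finset.sum_congr rfl fun s _ => ?_
      ring
    · refine Finset.sum_congr rfl fun s _ => ?_
      ring
  · refine Finset.sum_congr rfl fun s _ => ?_
    split_ifs with hs
    · have : (PowerSeries.mk fun m => ∑ x ∈ Finset.HasAntidiagonal.antidiagonal m, f x.1 * f' x.2) =
          PowerSeries.mk f * PowerSeries.mk f' := by
        ext n; simp [PowerSeries.coeff_mul]
      rw [this, map_mul]; ring
    · simp

theorem TT_mul_mem (l l' : List ℕ+) : TT l * TT l' ∈ VV := by
  induction l generalizing l' with
  | nil => rw [TT, one_mul]; exact Submodule.subset_span ⟨l', rfl⟩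
  | cons v l ih =>
    induction l' with
    | nil => rw [TT, TT, mul_one]; exact Submodule.subset_span ⟨v :: l, rfl⟩
    | cons w l' ih' =>
      have key := Jop_mul (fun m : ℕ => (m : ℚ) ^ (v : ℕ)) (fun m : ℕ => (m : ℚ) ^ (w : ℕ))
        (TT l) (TT l')
      rw [TT, TT, key]
      refine Submodule.add_mem _ (Submodule.add_mem _ ?_ ?_) ?_
      · exact Jlin_mem _ (pow_mem_polyZero _ v.2) _ (ih (w :: l'))
      · exact Jlin_mem _ (pow_mem_polyZero _ w.2) _ ih'
      · exact Jlin_mem _ (conv_mem_polyZero _ _ v.2) _ (ih l')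

theorem VV_mul_mem {g h : EE} (hg : g ∈ VV) (hh : h ∈ VV) : g * h ∈ VV := by
  induction hg using Submodule.span_induction with
  | mem f hf =>
    obtain ⟨u, rfl⟩ := hf
    induction hh using Submodule.span_induction with
    | mem g hg =>
      obtain ⟨l, rfl⟩ := hg
      exact TT_mul_mem u l
    | zero => simp
    | add x y _ _ hx hy => rw [mul_add]; exact Submodule.add_mem _ hx hy
    | smul c x _ hx => rw [mul_smul_comm]; exact Submodule.smul_mem _ _ hx
  | zero => simp
  | add x y _ _ hx hy => rw [add_mul]; exact Submodule.add_mem _ hx hy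
  | smul c x _ hx => rw [smul_mul_assoc]; exact Submodule.smul_mem _ _ hx

/-- Power series whose coefficients are stable limits of elements of `VV`. -/
noncomputable def AA : Subalgebra ℚ (PowerSeries ℚ) where
  carrier := {P | ∃ g ∈ VV, ∀ n B, n ≤ B → PowerSeries.coeff n P = PowerSeries.coeff n (g B 0)}
  mul_mem' := by
    rintro P Q ⟨g, hg, hg'⟩ ⟨h, hh, hh'⟩
    refine ⟨g * h, VV_mul_mem hg hh, fun n B hn => ?_⟩
    rw [Pi.mul_apply, Pi.mul_apply, PowerSeries.coeff_mul, PowerSeries.coeff_mul]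
    refine Finset.sum_congr rfl fun x hx => ?_
    have := Finset.HasAntidiagonal.mem_antidiagonal.1 hx
    rw [hg' _ B (by omega), hh' _ B (by omega)]
  add_mem' := by
    rintro P Q ⟨g, hg, hg'⟩ ⟨h, hh, hh'⟩
    refine ⟨g + h, Submodule.add_mem _ hg hh, fun n B hn => ?_⟩
    simp [hg' n B hn, hh' n B hn]
  algebraMap_mem' := by
    intro r
    refine ⟨r • 1, Submodule.smul_mem _ _ (Submodule.subset_span ⟨[], rfl⟩), fun n B _ => ?_⟩
    rw [Algebra.algebraMap_eq_smul_one]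
    rfl

theorem coeff_expand_mul' (v s k M : ℕ) (hv : 1 ≤ v) (hs : s ≠ 0) (hk : k ≤ M)
    (g : PowerSeries ℚ) :
    PowerSeries.coeff k (PowerSeries.expand s hs (PowerSeries.mk fun m : ℕ => (m : ℚ) ^ v) * g) =
      ∑ m ∈ Finset.Icc 1 M,
        if m * s ≤ k then (m : ℚ) ^ v * PowerSeries.coeff (k - m * s) g else 0 := by
  rw [← Lser_eq, PowerSeries.coeff_mul, ← Finset.sum_filter]
  have hs' : 0 < s := Nat.pos_of_ne_zero hs
  rw [← Finset.sum_filter_add_sum_filter_not _ (fun x : ℕ × ℕ => s ∣ x.1 ∧ x.1 ≠ 0)]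
  rw [Finset.sum_eq_zero (s := Finset.filter (fun x : ℕ × ℕ => ¬ (s ∣ x.1 ∧ x.1 ≠ 0)) _), add_zero]
  · refine Finset.sum_nbij' (fun x => x.1 / s) (fun m => (m * s, k - m * s)) ?_ ?_ ?_ ?_ ?_
    · rintro ⟨x, y⟩ h
      simp only [Finset.mem_filter, Finset.HasAntidiagonal.mem_antidiagonal] at h
      obtain ⟨h1, ⟨m, rfl⟩, h3⟩ := h
      have hm : 1 ≤ m := Nat.one_le_iff_ne_zero.2 (by rintro rfl; simp at h3)
      simp only [Finset.mem_filter, Finset.mem_Icc]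
      rw [Nat.mul_div_cancel_left _ hs']
      have : m ≤ s * m := Nat.le_mul_of_pos_left _ hs'
      have h5 := mul_comm s m
      omega
    · intro m h
      simp only [Finset.mem_filter, Finset.mem_Icc] at h
      simp only [Finset.mem_filter, Finset.HasAntidiagonal.mem_antidiagonal]
      refine ⟨by omega, Dvd.intro_left _ rfl, ?_⟩
      exact Nat.mul_ne_zero (by omega) hs
    · rintro ⟨x, y⟩ h
      simp only [Finset.mem_filter, Finset.HasAntidiagonal.mem_antidiagonal] at h
      obtain ⟨h1, h2, h3⟩ := h
      simp only [Nat.div_mul_cancel h2]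
      ext
      · rfl
      · simp; omega
    · intro m h
      simp [hs']
    · rintro ⟨x, y⟩ h
      simp only [Finset.mem_filter, Finset.HasAntidiagonal.mem_antidiagonal] at h
      obtain ⟨h1, h2, h3⟩ := h
      simp only [Nat.div_mul_cancel h2, Lser, PowerSeries.coeff_mk, if_pos h2]
      congr 3
      omega
  · rintro ⟨x, y⟩ h
    simp only [Finset.mem_filter] at h
    obtain ⟨-, h⟩ := h
    simp only [Lser, PowerSeries.coeff_mk]
    split_ifs with h2
    · have : x = 0 := by by_contra h3; exact h ⟨h2, h3⟩
      subst this
      simp [show v ≠ 0 by omega]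
    · simp

theorem sum_piFinset_succ {α : Type*} {n : ℕ} (S : Finset α) (f : (Fin (n + 1) → α) → ℚ) :
    ∑ x ∈ Fintype.piFinset (fun _ : Fin (n + 1) => S), f x =
      ∑ x ∈ S, ∑ r ∈ Fintype.piFinset (fun _ : Fin n => S), f (Fin.cons x r) := by
  rw [← Finset.sum_product']
  refine Finset.sum_nbij' (fun x => (x 0, Fin.tail x)) (fun p => Fin.cons p.1 p.2) ?_ ?_ ?_ ?_ ?_
  · intro x hx
    rw [Fintype.mem_piFinset] at hx
    simp only [Finset.mem_product, Fintype.mem_piFinset]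
    exact ⟨hx 0, fun i => hx i.succ⟩
  · rintro ⟨x, r⟩ h
    simp only [Finset.mem_product, Fintype.mem_piFinset] at h
    rw [Fintype.mem_piFinset]
    intro i
    refine Fin.cases ?_ ?_ i
    · exact h.1
    · intro j; exact h.2 j
  · intro x _; exact Fin.cons_self_tail x
  · rintro ⟨x, r⟩ _; simp
  · intro x _; simp

theorem coeff_TT (v : List ℕ+) (B M a k : ℕ) (hk : k ≤ M) :
    PowerSeries.coeff k (TT v B a) =
      ∑ sm ∈ Fintype.piFinset fun _ : Fin v.length => Finset.Ioc a B ×ˢ Finset.Icc 1 M,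
        if (∀ i j : Fin v.length, i < j → (sm i).1 < (sm j).1) ∧
            k = ∑ i : Fin v.length, (sm i).2 * (sm i).1 then
          ∏ i : Fin v.length, ((sm i).2 : ℚ) ^ (v.get i : ℕ)
        else 0 := by
  induction v generalizing a k with
  | nil =>
    rw [TT]
    have : Fintype.piFinset (fun _ : Fin ([] : List ℕ+).length =>
        Finset.Ioc a B ×ˢ Finset.Icc 1 M) = {fun i => i.elim0} := by
      ext x
      simp only [Fintype.mem_piFinset, Finset.mem_singleton]
      exact ⟨fun _ => funext fun i => i.elim0, fun _ i => i.elim0⟩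
    rw [this, Finset.sum_singleton]
    simp [PowerSeries.coeff_one]
  | cons w l ih =>
    change PowerSeries.coeff k (Jop _ (TT l) B a) =
      ∑ sm ∈ Fintype.piFinset fun _ : Fin (l.length + 1) => Finset.Ioc a B ×ˢ Finset.Icc 1 M,
        if (∀ i j : Fin (l.length + 1), i < j → (sm i).1 < (sm j).1) ∧
            k = ∑ i : Fin (l.length + 1), (sm i).2 * (sm i).1 then
          ∏ i : Fin (l.length + 1), ((sm i).2 : ℚ) ^ ((w :: l).get i : ℕ)
        else 0
    rw [sum_piFinset_succ, Finset.sum_product, Jop, map_sum]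
    refine Finset.sum_congr rfl fun s hs => ?_
    have hs := Finset.mem_Ioc.1 hs
    rw [dif_pos (show s ≠ 0 by omega), coeff_expand_mul' (w : ℕ) s k M w.pos _ hk]
    refine Finset.sum_congr rfl fun m hm => ?_
    have hm := Finset.mem_Icc.1 hm
    split_ifs with hms
    · rw [ih s _ (by omega), Finset.mul_sum]
      refine (Finset.sum_subset_zero_on_sdiff ?_ ?_ ?_)
      · refine Fintype.piFinset_subset _ _ fun i => Finset.product_subset_product_left ?_
        exact Finset.Ioc_subset_Ioc_left (by omega)
      · intro r hr
        rw [Finset.mem_sdiff] at hr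
        rw [if_neg]
        rintro ⟨h1, -⟩
        apply hr.2
        rw [Fintype.mem_piFinset]
        intro i
        have h2 := h1 0 i.succ (Fin.succ_pos i)
        simp only [Fin.cons_zero, Fin.cons_succ] at h2
        have h3 := (Fintype.mem_piFinset.1 hr.1) i
        simp only [Finset.mem_product, Finset.mem_Ioc] at h3 ⊢
        exact ⟨⟨h2, h3.1.2⟩, h3.2⟩
      · intro r hr
        rw [Fin.sum_univ_succ, Fin.prod_univ_succ]
        simp only [Fin.cons_zero, Fin.cons_succ, List.get_cons_zero]
        rw [mul_ite, mul_zero]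
        refine if_congr ?_ rfl rfl
        have e1 : (∀ i j : Fin (l.length + 1), i < j →
            ((Fin.cons (s, m) r : Fin (l.length + 1) → ℕ × ℕ) i).1 <
              ((Fin.cons (s, m) r : Fin (l.length + 1) → ℕ × ℕ) j).1) ↔
            ∀ i j : Fin l.length, i < j → (r i).1 < (r j).1 := by
          constructor
          · intro h i j hij
            exact h i.succ j.succ (Fin.succ_lt_succ_iff.2 hij)
          · intro h i j
            refine Fin.cases ?_ ?_ i
            · refine Fin.cases ?_ ?_ j
              · intro h; exact absurd h (lt_irrefl _)
              · intro j _
                have h3 := (Fintype.mem_piFinset.1 hr) j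
                simp only [Finset.mem_product, Finset.mem_Ioc] at h3
                simpa using h3.1.1
            · intro i
              refine Fin.cases ?_ ?_ j
              · intro h; exact absurd h (Fin.not_lt_zero _)
              · intro j hij
                simpa using h i j (Fin.succ_lt_succ_iff.1 hij)
        rw [e1]
        refine and_congr_right fun _ => ?_
        omega
    · refine (Finset.sum_eq_zero fun r _ => ?_).symm
      rw [if_neg]
      rintro ⟨-, h⟩
      rw [Fin.sum_univ_succ] at h
      simp only [Fin.cons_zero] at h
      omega

theorem macM_eq (v : List ℕ+) (n : ℕ) : (macM v n : ℚ) = PowerSeries.coeff n (TT v n 0) := by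
  rw [coeff_TT v n n 0 n le_rfl, macM]
  push_cast
  rfl

theorem exists_of_mem_AA (P : PowerSeries ℚ) (hP : P ∈ AA) :
    ∃ c : List ℕ+ →₀ ℚ, ∀ n, PowerSeries.coeff n P = c.sum fun v r => r * macM v n := by
  obtain ⟨g, hg, h⟩ := hP
  obtain ⟨c, rfl⟩ := (Finsupp.mem_span_range_iff_exists_finsupp).1 hg
  refine ⟨c, fun n => ?_⟩
  rw [h n n le_rfl]
  simp only [Finsupp.sum, Finset.sum_apply, Pi.smul_apply, map_sum, macM_eq]
  simp

/-- Generating function of `σ_k`. -/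
noncomputable def GG (k : ℕ) : PowerSeries ℚ :=
  PowerSeries.mk fun n => ∑ d ∈ n.divisors, (d : ℚ) ^ k

theorem GG_mem_AA (k : ℕ) (hk : 1 ≤ k) : GG k ∈ AA := by
  refine ⟨TT [⟨k, hk⟩], Submodule.subset_span ⟨_, rfl⟩, fun n B hn => ?_⟩
  change _ = PowerSeries.coeff n (∑ s ∈ Finset.Ioc 0 B, _)
  rw [map_sum, GG, PowerSeries.coeff_mk]
  rw [← Nat.sum_div_divisors]
  rcases Nat.eq_zero_or_pos n with rfl | hn0
  · simp only [Nat.divisors_zero, Finset.sum_empty]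
    refine (Finset.sum_eq_zero fun s hs => ?_).symm
    have hs := Finset.mem_Ioc.1 hs
    rw [dif_pos (show s ≠ 0 by omega), ← Lser_eq]
    simp [TT, Lser, show k ≠ 0 by omega]
  · have : n.divisors = (Finset.Ioc 0 B).filter (· ∣ n) := by
      ext d
      simp only [Nat.mem_divisors, Finset.mem_filter, Finset.mem_Ioc]
      constructor
      · rintro ⟨h, _⟩
        have := Nat.le_of_dvd hn0 h
        have := Nat.pos_of_dvd_of_pos h hn0
        exact ⟨⟨by omega, by omega⟩, h⟩
      · rintro ⟨_, h⟩
        exact ⟨h, by omega⟩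
    rw [this, Finset.sum_filter]
    refine Finset.sum_congr rfl fun s hs => ?_
    have hs := Finset.mem_Ioc.1 hs
    rw [dif_pos (show s ≠ 0 by omega), ← Lser_eq]
    simp [TT, Lser]

/-- Quadruples `(a, x, b, y)` of positive integers with `a x + b y = n`. -/
def QQ (n : ℕ) : Finset (ℕ × ℕ × ℕ × ℕ) :=
  (Finset.range (n + 1) ×ˢ Finset.range (n + 1) ×ˢ Finset.range (n + 1) ×ˢ
    Finset.range (n + 1)).filter fun q =>
      0 < q.1 ∧ 0 < q.2.1 ∧ 0 < q.2.2.1 ∧ 0 < q.2.2.2 ∧ q.1 * q.2.1 + q.2.2.1 * q.2.2.2 = n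

theorem mem_QQ (n a x b y : ℕ) :
    (a, x, b, y) ∈ QQ n ↔ 0 < a ∧ 0 < x ∧ 0 < b ∧ 0 < y ∧ a * x + b * y = n := by
  simp only [QQ, Finset.mem_filter, Finset.mem_product, Finset.mem_range]
  constructor
  · exact fun h => h.2
  · rintro h
    obtain ⟨ha, hx, hb, hy, h⟩ := id h
    have h1 := Nat.le_mul_of_pos_right a hx
    have h2 := Nat.le_mul_of_pos_left x ha
    have h3 := Nat.le_mul_of_pos_right b hy
    have h4 := Nat.le_mul_of_pos_left y hb
    exact ⟨⟨by omega, by omega, by omega, by omega⟩, ha, hx, hb, hy, h⟩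

section liouville

theorem QQ_swap (n : ℕ) (p : ℕ → ℕ → ℕ → ℕ → Prop) [∀ a x b y, Decidable (p a x b y)]
    (g : ℕ → ℕ → ℕ → ℕ → ℚ) :
    ∑ q ∈ (QQ n).filter (fun q => p q.1 q.2.1 q.2.2.1 q.2.2.2), g q.1 q.2.1 q.2.2.1 q.2.2.2 =
    ∑ q ∈ (QQ n).filter (fun q => p q.2.2.1 q.2.2.2 q.1 q.2.1), g q.2.2.1 q.2.2.2 q.1 q.2.1 := by
  refine Finset.sum_nbij' (fun q => (q.2.2.1, q.2.2.2, q.1, q.2.1))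
    (fun q => (q.2.2.1, q.2.2.2, q.1, q.2.1)) ?_ ?_ ?_ ?_ ?_
  · rintro ⟨a, x, b, y⟩ h
    simp only [Finset.mem_filter, mem_QQ] at h ⊢
    exact ⟨⟨h.1.2.2.1, h.1.2.2.2.1, h.1.1, h.1.2.1, by omega⟩, h.2⟩
  · rintro ⟨a, x, b, y⟩ h
    simp only [Finset.mem_filter, mem_QQ] at h ⊢
    exact ⟨⟨h.1.2.2.1, h.1.2.2.2.1, h.1.1, h.1.2.1, by omega⟩, h.2⟩
  · intros; rfl
  · intros; rfl
  · intros; rfl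

theorem QQ_split (n : ℕ) (s t : ℕ × ℕ × ℕ × ℕ → ℕ) (g : ℕ × ℕ × ℕ × ℕ → ℚ) :
    ∑ q ∈ QQ n, g q = ∑ q ∈ (QQ n).filter (fun q => s q = t q), g q +
      ∑ q ∈ (QQ n).filter (fun q => s q < t q), g q +
      ∑ q ∈ (QQ n).filter (fun q => t q < s q), g q := by
  simp only [Finset.sum_filter, ← Finset.sum_add_distrib]
  refine Finset.sum_congr rfl fun q _ => ?_
  rcases lt_trichotomy (s q) (t q) with h | h | h
  · simp [h, h.ne, h.not_gt]
  · simp [h]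
  · simp [h, h.ne', h.not_gt]

theorem QQ_minus (n : ℕ) (F : ℚ → ℚ) :
    ∑ q ∈ (QQ n).filter (fun q => q.2.2.1 < q.1), F ((q.1 : ℚ) - q.2.2.1) =
    ∑ q ∈ (QQ n).filter (fun q => q.2.1 < q.2.2.2), F q.1 := by
  refine Finset.sum_nbij' (fun q => (q.1 - q.2.2.1, q.2.1, q.2.2.1, q.2.1 + q.2.2.2))
    (fun q => (q.1 + q.2.2.1, q.2.1, q.2.2.1, q.2.2.2 - q.2.1)) ?_ ?_ ?_ ?_ ?_
  · rintro ⟨a, x, b, y⟩ h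
    simp only [Finset.mem_filter, mem_QQ] at h ⊢
    obtain ⟨⟨ha, hx, hb, hy, h⟩, h2⟩ := h
    obtain ⟨c, rfl⟩ := Nat.exists_eq_add_of_lt h2
    rw [show b + c + 1 - b = c + 1 by omega]
    refine ⟨⟨by omega, by omega, by omega, by omega, ?_⟩, by omega⟩
    rw [← h]; ring
  · rintro ⟨a, x, b, y⟩ h
    simp only [Finset.mem_filter, mem_QQ] at h ⊢
    obtain ⟨⟨ha, hx, hb, hy, h⟩, h2⟩ := h
    obtain ⟨c, rfl⟩ := Nat.exists_eq_add_of_lt h2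
    rw [show x + c + 1 - x = c + 1 by omega]
    refine ⟨⟨by omega, by omega, by omega, by omega, ?_⟩, by omega⟩
    rw [← h]; ring
  · rintro ⟨a, x, b, y⟩ h
    simp only [Finset.mem_filter, mem_QQ] at h
    simp only [Prod.mk.injEq, true_and, and_true]; omega
  · rintro ⟨a, x, b, y⟩ h
    simp only [Finset.mem_filter, mem_QQ] at h
    simp only [Prod.mk.injEq, true_and, and_true]; omega
  · rintro ⟨a, x, b, y⟩ h
    simp only [Finset.mem_filter, mem_QQ] at h
    simp only
    rw [Nat.cast_sub h.2.le]

theorem QQ_plus (n : ℕ) (F : ℚ → ℚ) :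
    ∑ q ∈ (QQ n).filter (fun q => q.2.1 < q.2.2.2), F ((q.1 : ℚ) + q.2.2.1) =
    ∑ q ∈ (QQ n).filter (fun q => q.2.2.1 < q.1), F q.1 := by
  refine Finset.sum_nbij' (fun q => (q.1 + q.2.2.1, q.2.1, q.2.2.1, q.2.2.2 - q.2.1))
    (fun q => (q.1 - q.2.2.1, q.2.1, q.2.2.1, q.2.1 + q.2.2.2)) ?_ ?_ ?_ ?_ ?_
  · rintro ⟨a, x, b, y⟩ h
    simp only [Finset.mem_filter, mem_QQ] at h ⊢
    obtain ⟨⟨ha, hx, hb, hy, h⟩, h2⟩ := h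
    obtain ⟨c, rfl⟩ := Nat.exists_eq_add_of_lt h2
    rw [show x + c + 1 - x = c + 1 by omega]
    refine ⟨⟨by omega, by omega, by omega, by omega, ?_⟩, by omega⟩
    rw [← h]; ring
  · rintro ⟨a, x, b, y⟩ h
    simp only [Finset.mem_filter, mem_QQ] at h ⊢
    obtain ⟨⟨ha, hx, hb, hy, h⟩, h2⟩ := h
    obtain ⟨c, rfl⟩ := Nat.exists_eq_add_of_lt h2
    rw [show b + c + 1 - b = c + 1 by omega]
    refine ⟨⟨by omega, by omega, by omega, by omega, ?_⟩, by omega⟩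
    rw [← h]; ring
  · rintro ⟨a, x, b, y⟩ h
    simp only [Finset.mem_filter, mem_QQ] at h
    simp only [Prod.mk.injEq, true_and, and_true]; omega
  · rintro ⟨a, x, b, y⟩ h
    simp only [Finset.mem_filter, mem_QQ] at h
    simp only [Prod.mk.injEq, true_and, and_true]; omega
  · rintro ⟨a, x, b, y⟩ h
    simp only
    rw [Nat.cast_add]

theorem QQ_mid (n : ℕ) (F : ℚ → ℚ) :
    ∑ q ∈ (QQ n).filter (fun q => q.2.2.2 < q.2.1), F q.1 =
    ∑ q ∈ (QQ n).filter (fun q => q.1 < q.2.2.1), F q.1 := by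
  refine Finset.sum_nbij' (fun q => (q.1, q.2.1 - q.2.2.2, q.2.2.1 + q.1, q.2.2.2))
    (fun q => (q.1, q.2.1 + q.2.2.2, q.2.2.1 - q.1, q.2.2.2)) ?_ ?_ ?_ ?_ ?_
  · rintro ⟨a, x, b, y⟩ h
    simp only [Finset.mem_filter, mem_QQ] at h ⊢
    obtain ⟨⟨ha, hx, hb, hy, h⟩, h2⟩ := h
    obtain ⟨c, rfl⟩ := Nat.exists_eq_add_of_lt h2
    rw [show y + c + 1 - y = c + 1 by omega]
    refine ⟨⟨by omega, by omega, by omega, by omega, ?_⟩, by omega⟩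
    rw [← h]; ring
  · rintro ⟨a, x, b, y⟩ h
    simp only [Finset.mem_filter, mem_QQ] at h ⊢
    obtain ⟨⟨ha, hx, hb, hy, h⟩, h2⟩ := h
    obtain ⟨c, rfl⟩ := Nat.exists_eq_add_of_lt h2
    rw [show a + c + 1 - a = c + 1 by omega]
    refine ⟨⟨by omega, by omega, by omega, by omega, ?_⟩, by omega⟩
    rw [← h]; ring
  · rintro ⟨a, x, b, y⟩ h
    simp only [Finset.mem_filter, mem_QQ] at h
    simp only [Prod.mk.injEq, true_and, and_true]; omega
  · rintro ⟨a, x, b, y⟩ h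
    simp only [Finset.mem_filter, mem_QQ] at h
    simp only [Prod.mk.injEq, true_and, and_true]; omega
  · rintro ⟨a, x, b, y⟩ h
    rfl

theorem QQ_diag (n : ℕ) (g : ℕ → ℕ → ℕ → ℚ) :
    ∑ q ∈ (QQ n).filter (fun q => q.2.1 = q.2.2.2), g q.1 q.2.2.1 q.2.1 =
    ∑ e ∈ n.divisors, ∑ c ∈ Finset.Ico 1 e, g c (e - c) (n / e) := by
  rw [Finset.sum_sigma']
  refine Finset.sum_nbij' (fun q => ⟨q.1 + q.2.2.1, q.1⟩)
    (fun z => (z.2, n / z.1, z.1 - z.2, n / z.1)) ?_ ?_ ?_ ?_ ?_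
  · rintro ⟨a, x, b, y⟩ h
    simp only [Finset.mem_filter, mem_QQ] at h
    obtain ⟨⟨ha, hx, hb, hy, h⟩, rfl⟩ := h
    simp only [Finset.mem_sigma, Nat.mem_divisors, Finset.mem_Ico]
    have h1 := Nat.mul_pos ha hx
    exact ⟨⟨⟨x, by rw [← h]; ring⟩, by omega⟩, by omega, by omega⟩
  · rintro ⟨e, c⟩ h
    simp only [Finset.mem_sigma, Nat.mem_divisors, Finset.mem_Ico] at h
    obtain ⟨⟨⟨x, rfl⟩, h0⟩, h1, h2⟩ := h
    simp only [Finset.mem_filter, mem_QQ]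
    have hx : 0 < x := Nat.pos_of_ne_zero (by rintro rfl; simp at h0)
    rw [Nat.mul_div_cancel_left _ (by omega)]
    refine ⟨⟨by omega, hx, by omega, hx, ?_⟩, trivial⟩
    rw [← add_mul, Nat.add_sub_cancel' h2.le]
  · rintro ⟨a, x, b, y⟩ h
    simp only [Finset.mem_filter, mem_QQ] at h
    obtain ⟨⟨ha, hx, hb, hy, h⟩, rfl⟩ := h
    have : n / (a + b) = x := by
      rw [← h, ← add_mul, Nat.mul_div_cancel_left _ (by omega)]
    simp [this]
  · rintro ⟨e, c⟩ h
    simp only [Finset.mem_sigma, Nat.mem_divisors, Finset.mem_Ico] at h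
    obtain ⟨_, h1, h2⟩ := h
    simp only [Nat.add_sub_cancel' h2.le]
  · rintro ⟨a, x, b, y⟩ h
    simp only [Finset.mem_filter, mem_QQ] at h
    obtain ⟨⟨ha, hx, hb, hy, h⟩, rfl⟩ := h
    have : n / (a + b) = x := by
      rw [← h, ← add_mul, Nat.mul_div_cancel_left _ (by omega)]
    simp [this]

theorem QQ_diag' (n : ℕ) (F : ℚ → ℚ) :
    ∑ q ∈ (QQ n).filter (fun q => q.1 = q.2.2.1), F q.1 =
    ∑ c ∈ n.divisors, ((n / c : ℕ) - 1 : ℚ) * F c := by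
  have h1 : ∑ q ∈ (QQ n).filter (fun q => q.1 = q.2.2.1), F q.1 =
      ∑ q ∈ (QQ n).filter (fun q => q.2.1 = q.2.2.2), F q.2.1 := by
    refine Finset.sum_nbij' (fun q => (q.2.1, q.1, q.2.2.2, q.2.2.1))
      (fun q => (q.2.1, q.1, q.2.2.2, q.2.2.1)) ?_ ?_ ?_ ?_ ?_
    · rintro ⟨a, x, b, y⟩ h
      simp only [Finset.mem_filter, mem_QQ] at h ⊢
      exact ⟨⟨h.1.2.1, h.1.1, h.1.2.2.2.1, h.1.2.2.1, by rw [← h.1.2.2.2.2]; ring⟩, h.2⟩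
    · rintro ⟨a, x, b, y⟩ h
      simp only [Finset.mem_filter, mem_QQ] at h ⊢
      exact ⟨⟨h.1.2.1, h.1.1, h.1.2.2.2.1, h.1.2.2.1, by rw [← h.1.2.2.2.2]; ring⟩, h.2⟩
    · intros; rfl
    · intros; rfl
    · intros; rfl
  rw [h1, QQ_diag n (fun _ _ x => F x), ← Nat.sum_div_divisors n (fun c => ((n / c : ℕ) - 1 : ℚ) * F c)]
  refine Finset.sum_congr rfl fun e he => ?_
  rw [Finset.sum_const, Nat.card_Ico, nsmul_eq_mul]
  have he' := Nat.mem_divisors.1 he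
  have : 1 ≤ e := Nat.pos_of_dvd_of_pos he'.1 (Nat.pos_of_ne_zero he'.2)
  rw [Nat.cast_sub this, Nat.div_div_self he'.1 he'.2, Nat.cast_one]

theorem liouville (n : ℕ) (F : ℚ → ℚ) (hF : ∀ x, F (-x) = F x) (h0 : F 0 = 0) :
    ∑ q ∈ QQ n, (F ((q.1 : ℚ) - q.2.2.1) - F ((q.1 : ℚ) + q.2.2.1)) =
      ∑ c ∈ n.divisors, (2 * ((n / c : ℕ) : ℚ) * F c - (c + 1) * F c -
        2 * ∑ l ∈ Finset.range c, F l) := by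
  have hm : ∑ q ∈ QQ n, F ((q.1 : ℚ) - q.2.2.1) =
      2 * ∑ q ∈ (QQ n).filter (fun q => q.2.1 < q.2.2.2), F q.1 := by
    rw [QQ_split n (fun q => q.1) (fun q => q.2.2.1), QQ_minus,
      QQ_swap n (fun a _ b _ => a < b) (fun a _ b _ => F ((a : ℚ) - b))]
    have e1 : ∑ q ∈ (QQ n).filter (fun q => q.2.2.1 < q.1), F ((q.2.2.1 : ℚ) - q.1) =
        ∑ q ∈ (QQ n).filter (fun q => q.2.2.1 < q.1), F ((q.1 : ℚ) - q.2.2.1) :=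
      Finset.sum_congr rfl fun q _ => by rw [← hF, neg_sub]
    have e2 : ∑ q ∈ (QQ n).filter (fun q => q.1 = q.2.2.1), F ((q.1 : ℚ) - q.2.2.1) = 0 :=
      Finset.sum_eq_zero fun q hq => by
        rw [(Finset.mem_filter.1 hq).2, sub_self, h0]
    rw [e1, e2, QQ_minus]; ring
  have hp : ∑ q ∈ QQ n, F ((q.1 : ℚ) + q.2.2.1) =
      ∑ c ∈ n.divisors, ((c : ℚ) - 1) * F c +
      2 * ∑ q ∈ (QQ n).filter (fun q => q.2.2.1 < q.1), F q.1 := by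
    rw [QQ_split n (fun q => q.2.1) (fun q => q.2.2.2), QQ_plus,
      QQ_swap n (fun _ x _ y => y < x) (fun a _ b _ => F ((a : ℚ) + b))]
    have e1 : ∑ q ∈ (QQ n).filter (fun q => q.2.1 < q.2.2.2), F ((q.2.2.1 : ℚ) + q.1) =
        ∑ q ∈ (QQ n).filter (fun q => q.2.1 < q.2.2.2), F ((q.1 : ℚ) + q.2.2.1) :=
      Finset.sum_congr rfl fun q _ => by rw [add_comm]
    rw [e1, QQ_plus, QQ_diag n (fun a b _ => F ((a : ℚ) + b))]
    have e2 : ∑ e ∈ n.divisors, ∑ c ∈ Finset.Ico 1 e, F ((c : ℚ) + (e - c : ℕ)) =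
        ∑ c ∈ n.divisors, ((c : ℚ) - 1) * F c := by
      refine Finset.sum_congr rfl fun e he => ?_
      have he' := Nat.mem_divisors.1 he
      have : 1 ≤ e := Nat.pos_of_dvd_of_pos he'.1 (Nat.pos_of_ne_zero he'.2)
      rw [Finset.sum_congr rfl (g := fun _ => F e)]
      · rw [Finset.sum_const, Nat.card_Ico, nsmul_eq_mul, Nat.cast_sub this, Nat.cast_one]
      · intro c hc
        have := Finset.mem_Ico.1 hc
        rw [Nat.cast_sub this.2.le, add_sub_cancel]
    rw [e2]; ring
  have t1 := QQ_split n (fun q => q.2.1) (fun q => q.2.2.2) (fun q => F q.1)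
  have t2 := QQ_split n (fun q => q.1) (fun q => q.2.2.1) (fun q => F q.1)
  rw [QQ_mid] at t1
  rw [QQ_diag'] at t2
  rw [QQ_diag n (fun a _ _ => F a)] at t1
  have e3 : ∑ e ∈ n.divisors, ∑ c ∈ Finset.Ico 1 e, F (c : ℚ) =
      ∑ e ∈ n.divisors, ∑ c ∈ Finset.range e, F (c : ℚ) := by
    refine Finset.sum_congr rfl fun e he => ?_
    have he' := Nat.mem_divisors.1 he
    have : 0 < e := Nat.pos_of_dvd_of_pos he'.1 (Nat.pos_of_ne_zero he'.2)
    rw [Finset.range_eq_Ico, Finset.sum_eq_sum_Ico_succ_bot this]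
    simp [h0]
  rw [e3] at t1
  rw [Finset.sum_sub_distrib, hm, hp]
  have e4 : ∑ c ∈ n.divisors, (2 * ((n / c : ℕ) : ℚ) * F c - (c + 1) * F c -
        2 * ∑ l ∈ Finset.range c, F l) =
      2 * ∑ c ∈ n.divisors, ((n / c : ℕ) - 1 : ℚ) * F c - ∑ c ∈ n.divisors, ((c : ℚ) - 1) * F c
        - 2 * ∑ e ∈ n.divisors, ∑ c ∈ Finset.range e, F (c : ℚ) := by
    rw [Finset.mul_sum, Finset.mul_sum, ← Finset.sum_sub_distrib, ← Finset.sum_sub_distrib]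
    exact Finset.sum_congr rfl fun c _ => by ring
  rw [e4]
  linear_combination 2 * t2 - 2 * t1

end liouville

theorem coeff_GG_mul (i j n : ℕ) : PowerSeries.coeff n (GG i * GG j) =
    ∑ q ∈ QQ n, (q.1 : ℚ) ^ i * (q.2.2.1 : ℚ) ^ j := by
  simp only [PowerSeries.coeff_mul, GG, PowerSeries.coeff_mk, Finset.sum_mul_sum,
    ← Finset.sum_product']
  rw [Finset.sum_sigma']
  symm
  refine Finset.sum_nbij' (fun q => ⟨(q.1 * q.2.1, q.2.2.1 * q.2.2.2), (q.1, q.2.2.1)⟩)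
    (fun z => (z.2.1, z.1.1 / z.2.1, z.2.2, z.1.2 / z.2.2)) ?_ ?_ ?_ ?_ ?_
  · rintro ⟨a, x, b, y⟩ h
    simp only [mem_QQ] at h
    obtain ⟨ha, hx, hb, hy, h⟩ := h
    simp only [Finset.mem_sigma, Finset.HasAntidiagonal.mem_antidiagonal, Finset.mem_product,
      Nat.mem_divisors]
    exact ⟨h, ⟨Dvd.intro _ rfl, (Nat.mul_pos ha hx).ne'⟩, Dvd.intro _ rfl, (Nat.mul_pos hb hy).ne'⟩
  · rintro ⟨⟨u, v⟩, a, b⟩ h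
    simp only [Finset.mem_sigma, Finset.HasAntidiagonal.mem_antidiagonal, Finset.mem_product,
      Nat.mem_divisors] at h
    obtain ⟨h, ⟨⟨x, rfl⟩, h2⟩, ⟨y, rfl⟩, h4⟩ := h
    have h2 := Nat.pos_of_ne_zero h2
    have h4 := Nat.pos_of_ne_zero h4
    simp only [mem_QQ]
    have ha := Nat.pos_of_mul_pos_right h2
    have hb := Nat.pos_of_mul_pos_right h4
    rw [Nat.mul_div_cancel_left _ ha, Nat.mul_div_cancel_left _ hb]
    exact ⟨ha, Nat.pos_of_mul_pos_left h2, hb, Nat.pos_of_mul_pos_left h4, h⟩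
  · rintro ⟨a, x, b, y⟩ h
    simp only [mem_QQ] at h
    obtain ⟨ha, hx, hb, hy, h⟩ := h
    simp only [Nat.mul_div_cancel_left _ ha, Nat.mul_div_cancel_left _ hb]
  · rintro ⟨⟨u, v⟩, a, b⟩ h
    simp only [Finset.mem_sigma, Finset.HasAntidiagonal.mem_antidiagonal, Finset.mem_product,
      Nat.mem_divisors] at h
    obtain ⟨h, ⟨h1, h2⟩, h3, h4⟩ := h
    simp only [Nat.mul_div_cancel' h1, Nat.mul_div_cancel' h3]
  · rintro ⟨a, x, b, y⟩ h
    rfl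

/-- The algebra generated by the odd divisor sum series. -/
noncomputable def BB : Subalgebra ℚ (PowerSeries ℚ) :=
  Algebra.adjoin ℚ {P | ∃ k, Odd k ∧ P = GG k}

theorem GG_mem_BB (k : ℕ) (hk : Odd k) : GG k ∈ BB := Algebra.subset_adjoin ⟨k, hk, rfl⟩

theorem BB_le_AA : BB ≤ AA := by
  refine Algebra.adjoin_le ?_
  rintro _ ⟨k, hk, rfl⟩
  exact GG_mem_AA k hk.pos

theorem oddPoly (m c : ℕ) (hm : 1 ≤ m) :
    ((c : ℚ) + 1) * (c : ℚ) ^ (2 * m) + 2 * ∑ l ∈ Finset.range c, (l : ℚ) ^ (2 * m) =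
      (c : ℚ) ^ (2 * m + 1) + ∑ i ∈ Finset.range (2 * m + 1),
        (if Even i then 2 * (bernoulli i * ((2 * m + 1).choose i) / (2 * m + 1)) else 0) *
          (c : ℚ) ^ (2 * m + 1 - i) := by
  rw [sum_range_pow]
  have : ∀ i ∈ Finset.range (2 * m + 1),
      bernoulli i * ((2 * m + 1).choose i) * (c : ℚ) ^ (2 * m + 1 - i) / ((2 * m : ℕ) + 1) =
      (if Even i then (bernoulli i * ((2 * m + 1).choose i) / (2 * m + 1)) else 0) *
          (c : ℚ) ^ (2 * m + 1 - i) + if 1 = i then - (c : ℚ) ^ (2 * m) / 2 else 0 := by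
    intro i hi
    split_ifs with h1 h2 h2
    · subst h2; exact absurd h1 (by decide)
    · push_cast; ring
    · subst h2
      have : (2 * (m : ℚ) + 1) ≠ 0 := by positivity
      simp [bernoulli_one]
      field_simp
    · have : Odd i := Nat.not_even_iff_odd.1 h1
      have h3 : 1 < i := by have := this.pos; omega
      rw [bernoulli_eq_zero_of_odd this h3]; simp
  rw [Finset.sum_congr rfl this, Finset.sum_add_distrib, Finset.sum_ite_eq,
    if_pos (Finset.mem_range.2 (by omega)), mul_add, Finset.mul_sum]
  have e : ∑ i ∈ Finset.range (2 * m + 1),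
        2 * ((if Even i then (bernoulli i * ((2 * m + 1).choose i) / (2 * m + 1)) else 0) *
          (c : ℚ) ^ (2 * m + 1 - i)) = ∑ i ∈ Finset.range (2 * m + 1),
        (if Even i then 2 * (bernoulli i * ((2 * m + 1).choose i) / (2 * m + 1)) else 0) *
          (c : ℚ) ^ (2 * m + 1 - i) :=
    Finset.sum_congr rfl fun i _ => by split_ifs <;> ring
  rw [e]; ring

/-- Euler operator. -/
noncomputable def theta (P : PowerSeries ℚ) : PowerSeries ℚ :=
  PowerSeries.mk fun n => (n : ℚ) * PowerSeries.coeff n P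

theorem theta_GG (m : ℕ) (hm : 1 ≤ m) :
    theta (GG (2 * m - 1)) = (1 / 2 : ℚ) • (
      ∑ i ∈ Finset.range (2 * m + 1), (((-1) ^ (2 * m - i) - 1) * ((2 * m).choose i : ℚ)) •
        (GG i * GG (2 * m - i)) + (GG (2 * m + 1) + ∑ i ∈ Finset.range (2 * m + 1),
        (if Even i then 2 * (bernoulli i * ((2 * m + 1).choose i) / (2 * m + 1)) else 0) •
          GG (2 * m + 1 - i))) := by
  ext n
  have L := liouville n (fun x => x ^ (2 * m)) (fun x => (even_two_mul m).neg_pow x)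
    (by simp; omega)
  simp only [theta, PowerSeries.coeff_mk, map_smul, map_add, map_sum, coeff_GG_mul, smul_eq_mul]
  have e1 : ∑ i ∈ Finset.range (2 * m + 1), (((-1) ^ (2 * m - i) - 1) * ((2 * m).choose i : ℚ)) *
      ∑ q ∈ QQ n, (q.1 : ℚ) ^ i * (q.2.2.1 : ℚ) ^ (2 * m - i) =
      ∑ q ∈ QQ n, (((q.1 : ℚ) - q.2.2.1) ^ (2 * m) - ((q.1 : ℚ) + q.2.2.1) ^ (2 * m)) := by
    simp only [Finset.mul_sum]
    rw [Finset.sum_comm]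
    refine Finset.sum_congr rfl fun q _ => ?_
    rw [sub_eq_add_neg (q.1 : ℚ), add_pow, add_pow, ← Finset.sum_sub_distrib]
    refine Finset.sum_congr rfl fun i _ => ?_
    rw [neg_pow (q.2.2.1 : ℚ)]; ring
  rw [e1, L]
  simp only [GG, PowerSeries.coeff_mk, Finset.mul_sum (Nat.divisors n)]
  rw [Finset.sum_comm (s := Finset.range (2 * m + 1)), ← Finset.sum_add_distrib,
    ← Finset.sum_add_distrib, Finset.mul_sum]
  refine Finset.sum_congr rfl fun c hc => ?_
  rw [← oddPoly m c hm]
  have hc' := Nat.mem_divisors.1 hc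
  have : (n : ℚ) = c * (n / c : ℕ) := by rw [← Nat.cast_mul, Nat.mul_div_cancel' hc'.1]
  rw [show 2 * m = 2 * m - 1 + 1 by omega, pow_succ, Nat.add_sub_cancel]
  linear_combination (c : ℚ) ^ (2 * m - 1) * this

theorem theta_GG_mem (k : ℕ) (hk : Odd k) : theta (GG k) ∈ BB := by
  obtain ⟨r, rfl⟩ := hk
  have := theta_GG (r + 1) (by omega)
  rw [show 2 * (r + 1) - 1 = 2 * r + 1 by omega] at this
  rw [this]
  refine BB.smul_mem (add_mem (sum_mem fun i hi => ?_) (add_mem (GG_mem_BB _ ⟨r + 1, by omega⟩)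
    (sum_mem fun i hi => ?_))) _
  · have hi' := Finset.mem_range.1 hi
    rcases Nat.even_or_odd i with h | h
    · have : Even (2 * (r + 1) - i) := by
        rw [Nat.even_sub (by omega)]; simp [h]
      rw [this.neg_one_pow]; simp
    · refine BB.smul_mem (mul_mem (GG_mem_BB _ h) (GG_mem_BB _ ?_)) _
      obtain ⟨t, rfl⟩ := h
      exact ⟨r - t, by omega⟩
  · have hi' := Finset.mem_range.1 hi
    split_ifs with h
    · refine BB.smul_mem (GG_mem_BB _ ?_) _
      obtain ⟨t, rfl⟩ := h
      exact ⟨r + 1 - t, by omega⟩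
    · simp

theorem theta_mem (P : PowerSeries ℚ) (hP : P ∈ BB) : theta P ∈ BB := by
  induction hP using Algebra.adjoin_induction with
  | mem x hx => obtain ⟨k, hk, rfl⟩ := hx; exact theta_GG_mem k hk
  | algebraMap r =>
    have : theta (algebraMap ℚ (PowerSeries ℚ) r) = 0 := by
      ext n
      rw [Algebra.algebraMap_eq_smul_one]
      simp [theta, PowerSeries.coeff_one]
      tauto
    rw [this]; exact zero_mem _
  | add x y _ _ hx hy =>
    have : theta (x + y) = theta x + theta y := by ext n; simp [theta, mul_add]
    rw [this]; exact add_mem hx hy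
  | mul x y hx' hy' hx hy =>
    have : theta (x * y) = theta x * y + x * theta y := by
      ext n
      simp only [theta, PowerSeries.coeff_mk, map_add, PowerSeries.coeff_mul, Finset.mul_sum]
      rw [← Finset.sum_add_distrib]
      refine Finset.sum_congr rfl fun z hz => ?_
      have := Finset.HasAntidiagonal.mem_antidiagonal.1 hz
      rw [← this]; push_cast; ring
    rw [this]; exact add_mem (mul_mem hx hy') (mul_mem hx' hy)

theorem poly_mem_BB (p : MvPolynomial (Fin 2) ℚ) (k : ℕ) (hk : Odd k) :
    (PowerSeries.mk fun n : ℕ => ∑ d ∈ n.divisors,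
      (d : ℚ) ^ k * MvPolynomial.eval ![(n : ℚ), (d : ℚ) ^ 2] p) ∈ BB := by
  induction p using MvPolynomial.induction_on generalizing k with
  | C a =>
    convert BB.smul_mem (GG_mem_BB k hk) a using 1
    ext n
    simp [GG, Finset.mul_sum, mul_comm]
  | add p q hp hq =>
    convert add_mem (hp k hk) (hq k hk) using 1
    ext n
    simp [mul_add, Finset.sum_add_distrib]
  | mul_X p i hp =>
    fin_cases i
    · convert theta_mem _ (hp k hk) using 1
      ext n
      simp only [theta, PowerSeries.coeff_mk, Finset.mul_sum]
      refine Finset.sum_congr rfl fun d _ => ?_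
      simp
      ring
    · convert hp (k + 2) (by obtain ⟨t, rfl⟩ := hk; exact ⟨t + 1, by omega⟩) using 1
      ext n
      simp only [PowerSeries.coeff_mk]
      refine Finset.sum_congr rfl fun d _ => ?_
      simp
      ring

/-- Nonnegative part of the detector. -/
def FF (n d : ℚ) : ℚ := ((d ^ 2 - 1) * (d ^ 2 - n ^ 2) * (d ^ 6 - n ^ 2) * (d ^ 6 - n ^ 4)) ^ 2

/-- Correction term, vanishing at prime cubes but not at primes. -/
def HH (n d : ℚ) : ℚ := (d ^ 2 - n ^ 2) * (d ^ 6 - n ^ 4) *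
  (-(1 + d ^ 4 + d ^ 8) * (1 - n ^ 2) + (d ^ 6 - n ^ 2) * (n ^ 3 + 3))

/-- The detector. -/
def ff (n : ℕ) : ℚ := ∑ d ∈ n.divisors, (d : ℚ) * (8 * (n : ℚ) ^ 20 * FF n d + HH n d)

open MvPolynomial in
theorem ff_mem (i : ℕ) : (PowerSeries.mk fun n : ℕ => (n : ℚ) ^ i * ff n) ∈ BB := by
  have := poly_mem_BB (X 0 ^ i * (8 * X 0 ^ 20 * ((X 1 - 1) * (X 1 - X 0 ^ 2) *
    (X 1 ^ 3 - X 0 ^ 2) * (X 1 ^ 3 - X 0 ^ 4)) ^ 2 + (X 1 - X 0 ^ 2) * (X 1 ^ 3 - X 0 ^ 4) *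
    (-(1 + X 1 ^ 2 + X 1 ^ 4) * (1 - X 0 ^ 2) + (X 1 ^ 3 - X 0 ^ 2) * (X 0 ^ 3 + 3)))) 1 odd_one
  convert this using 1
  ext n
  simp only [PowerSeries.coeff_mk, ff, Finset.mul_sum]
  refine Finset.sum_congr rfl fun d _ => ?_
  have e8 : (eval ![(n : ℚ), (d : ℚ) ^ 2]) 8 = 8 := map_ofNat _ 8
  have e3 : (eval ![(n : ℚ), (d : ℚ) ^ 2]) 3 = 3 := map_ofNat _ 3
  simp only [FF, HH, map_mul, map_add, map_sub, map_neg, map_pow, map_one, eval_X, e8, e3,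
    Matrix.cons_val_zero, Matrix.cons_val_one]
  ring

theorem ff_prime (p : ℕ) (hp : p.Prime) : ff p ≠ 0 := by
  have h1 : (1 : ℚ) < p := by exact_mod_cast hp.one_lt
  rw [ff, hp.sum_divisors]
  have : (p : ℚ) * (8 * (p : ℚ) ^ 20 * FF p p + HH p p) +
      ((1 : ℕ) : ℚ) * (8 * (p : ℚ) ^ 20 * FF p (1 : ℕ) + HH p (1 : ℕ)) =
      (p : ℚ) ^ 3 * (1 - (p : ℚ) ^ 2) ^ 2 * (1 - (p : ℚ) ^ 4) := by
    simp only [FF, HH]; push_cast; ring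
  rw [this]
  have h2 : (1 : ℚ) < (p : ℚ) ^ 2 := one_lt_pow₀ h1 (by norm_num)
  have h4 : (1 : ℚ) < (p : ℚ) ^ 4 := one_lt_pow₀ h1 (by norm_num)
  refine mul_ne_zero (mul_ne_zero (by positivity) (pow_ne_zero _ ?_)) ?_ <;> linarith

theorem ff_cube (p : ℕ) (hp : p.Prime) : ff (p ^ 3) = 0 := by
  rw [ff, Nat.divisors_prime_pow hp, Finset.sum_map]
  simp only [Finset.sum_range_succ, Finset.sum_range_zero, Function.Embedding.coeFn_mk]
  simp only [FF, HH]
  push_cast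
  ring

theorem HH_bound (n d : ℚ) (hd : 1 ≤ d) (hdn : d ≤ n) : |HH n d| ≤ 7 * n ^ 18 := by
  have hn : 1 ≤ n := hd.trans hdn
  have hn0 : 0 ≤ n := by linarith
  have hd0 : 0 ≤ d := by linarith
  have a2 : d ^ 2 ≤ n ^ 2 := pow_le_pow_left₀ hd0 hdn 2
  have a4 : d ^ 4 ≤ n ^ 4 := pow_le_pow_left₀ hd0 hdn 4
  have a6 : d ^ 6 ≤ n ^ 6 := pow_le_pow_left₀ hd0 hdn 6
  have a8 : d ^ 8 ≤ n ^ 8 := pow_le_pow_left₀ hd0 hdn 8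
  have b2 : (1 : ℚ) ≤ n ^ 2 := one_le_pow₀ hn
  have b3 : (1 : ℚ) ≤ n ^ 3 := one_le_pow₀ hn
  have b8 : (1 : ℚ) ≤ n ^ 8 := one_le_pow₀ hn
  have b26 : n ^ 2 ≤ n ^ 6 := pow_le_pow_right₀ hn (by norm_num)
  have b46 : n ^ 4 ≤ n ^ 6 := pow_le_pow_right₀ hn (by norm_num)
  have b48 : n ^ 4 ≤ n ^ 8 := pow_le_pow_right₀ hn (by norm_num)
  have b910 : n ^ 9 ≤ n ^ 10 := pow_le_pow_right₀ hn (by norm_num)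
  have c2 : 0 ≤ d ^ 2 := by positivity
  have c4 : 0 ≤ d ^ 4 := by positivity
  have c6 : 0 ≤ d ^ 6 := by positivity
  have c8 : 0 ≤ d ^ 8 := by positivity
  have e2 : 0 ≤ n ^ 2 := by positivity
  have e4 : 0 ≤ n ^ 4 := by positivity
  have k1 : |d ^ 2 - n ^ 2| ≤ n ^ 2 := abs_le.2 ⟨by linarith, by linarith⟩
  have k2 : |d ^ 6 - n ^ 4| ≤ n ^ 6 := abs_le.2 ⟨by linarith, by linarith⟩
  have k3 : |-(1 + d ^ 4 + d ^ 8)| ≤ 3 * n ^ 8 := abs_le.2 ⟨by linarith, by linarith⟩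
  have k4 : |1 - n ^ 2| ≤ n ^ 2 := abs_le.2 ⟨by linarith, by linarith⟩
  have k5 : |d ^ 6 - n ^ 2| ≤ n ^ 6 := abs_le.2 ⟨by linarith, by linarith⟩
  have k6 : |n ^ 3 + 3| ≤ 4 * n ^ 3 := abs_le.2 ⟨by linarith, by linarith⟩
  have k7 : |-(1 + d ^ 4 + d ^ 8) * (1 - n ^ 2) + (d ^ 6 - n ^ 2) * (n ^ 3 + 3)| ≤ 7 * n ^ 10 := by
    refine (abs_add_le _ _).trans ?_
    rw [abs_mul, abs_mul]
    have m1 := mul_le_mul k3 k4 (abs_nonneg _) (by positivity)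
    have m2 := mul_le_mul k5 k6 (abs_nonneg _) (by positivity)
    nlinarith [m1, m2, b910]
  rw [HH, abs_mul, abs_mul]
  calc |d ^ 2 - n ^ 2| * |d ^ 6 - n ^ 4| * _ ≤ (n ^ 2 * n ^ 6) * (7 * n ^ 10) :=
        mul_le_mul (mul_le_mul k1 k2 (abs_nonneg _) e2) k7 (abs_nonneg _) (by positivity)
    _ = 7 * n ^ 18 := by ring

theorem ff_pos (n : ℕ) (hn : 2 ≤ n) (hp : ¬ n.Prime) (hc : ¬ ∃ p : ℕ, p.Prime ∧ n = p ^ 3) :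
    0 < ff n := by
  set p := n.minFac with hpdef
  have pp : p.Prime := Nat.minFac_prime (by omega)
  have pn : p ∣ n := Nat.minFac_dvd n
  have hn0 : n ≠ 0 := by omega
  have h1 : p ≠ 1 := pp.ne_one
  have h2 : p ≠ n := fun h => hp (h ▸ pp)
  have h3 : p ^ 3 ≠ n := fun h => hc ⟨p, pp, h.symm⟩
  have h4 : p ^ 3 ≠ n ^ 2 := by
    intro h
    obtain ⟨m, hm⟩ := pn
    rw [hm] at h
    have h5 : p = m ^ 2 := by
      have : p ^ 2 * p = p ^ 2 * m ^ 2 := by rw [← mul_pow, ← h]; ring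
      exact Nat.eq_of_mul_eq_mul_left (pow_pos pp.pos 2) this
    rw [h5] at pp
    exact Nat.Prime.not_prime_pow (le_refl 2) pp
  have hFF : (1 : ℚ) ≤ FF n p := by
    have : FF n p = (((((p : ℤ) ^ 2 - 1) * ((p : ℤ) ^ 2 - (n : ℤ) ^ 2) * ((p : ℤ) ^ 6 - (n : ℤ) ^ 2) *
        ((p : ℤ) ^ 6 - (n : ℤ) ^ 4)) ^ 2 : ℤ) : ℚ) := by
      rw [FF]; push_cast; ring
    rw [this]
    have key : ∀ a b : ℕ, a ≠ b → ((a : ℤ) ^ 2 - (b : ℤ) ^ 2) ≠ 0 := by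
      intro a b hab h
      apply hab
      have : (a : ℤ) ^ 2 = (b : ℤ) ^ 2 := by linarith
      have : a ^ 2 = b ^ 2 := by exact_mod_cast this
      exact Nat.pow_left_injective (by norm_num : 2 ≠ 0) this
    have q1 := key p 1 h1
    have q2 := key p n h2
    have q3 := key (p ^ 3) n h3
    have q4 := key (p ^ 3) (n ^ 2) h4
    have : (((p : ℤ) ^ 2 - 1) * ((p : ℤ) ^ 2 - (n : ℤ) ^ 2) * ((p : ℤ) ^ 6 - (n : ℤ) ^ 2) *
        ((p : ℤ) ^ 6 - (n : ℤ) ^ 4)) ≠ 0 := by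
      push_cast at q1 q3 q4
      refine mul_ne_zero (mul_ne_zero (mul_ne_zero ?_ q2) ?_) ?_
      · simpa using q1
      · rw [← pow_mul] at q3; exact q3
      · rw [← pow_mul, ← pow_mul] at q4; exact q4
    have h6 := pow_pos (abs_pos.2 this) 2
    rw [sq_abs] at h6
    exact_mod_cast h6
  have hn1 : (1 : ℚ) ≤ n := by exact_mod_cast (by omega : 1 ≤ n)
  have hsplit : ff n = 8 * (n : ℚ) ^ 20 * ∑ d ∈ n.divisors, (d : ℚ) * FF n d +
      ∑ d ∈ n.divisors, (d : ℚ) * HH n d := by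
    rw [ff, Finset.mul_sum, ← Finset.sum_add_distrib]
    exact Finset.sum_congr rfl fun d _ => by ring
  have hA : (1 : ℚ) ≤ ∑ d ∈ n.divisors, (d : ℚ) * FF n d := by
    have hmem : p ∈ n.divisors := Nat.mem_divisors.2 ⟨pn, hn0⟩
    have := Finset.single_le_sum (f := fun d : ℕ => (d : ℚ) * FF n d) (s := n.divisors)
      (fun d _ => mul_nonneg (Nat.cast_nonneg d) (sq_nonneg _)) hmem
    have hp1 : (1 : ℚ) ≤ p := by exact_mod_cast pp.one_lt.le
    have h7 : (1 : ℚ) ≤ p * FF n p := by nlinarith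
    exact h7.trans this
  have hB : |∑ d ∈ n.divisors, (d : ℚ) * HH n d| ≤ 7 * (n : ℚ) ^ 20 := by
    refine (Finset.abs_sum_le_sum_abs _ _).trans ?_
    have : ∀ d ∈ n.divisors, |(d : ℚ) * HH n d| ≤ 7 * (n : ℚ) ^ 19 := by
      intro d hd
      have hd' := Nat.mem_divisors.1 hd
      have g1 : (1 : ℚ) ≤ d := by
        exact_mod_cast Nat.pos_of_dvd_of_pos hd'.1 (Nat.pos_of_ne_zero hn0)
      have g2 : (d : ℚ) ≤ n := by
        exact_mod_cast Nat.le_of_dvd (Nat.pos_of_ne_zero hn0) hd'.1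
      rw [abs_mul, abs_of_nonneg (by linarith : (0 : ℚ) ≤ d)]
      calc (d : ℚ) * |HH n d| ≤ n * (7 * (n : ℚ) ^ 18) :=
            mul_le_mul g2 (HH_bound n d g1 g2) (abs_nonneg _) (by linarith)
        _ = 7 * (n : ℚ) ^ 19 := by ring
    refine (Finset.sum_le_card_nsmul _ _ _ this).trans ?_
    rw [nsmul_eq_mul]
    have hcard : ((n.divisors.card : ℕ) : ℚ) ≤ n := by exact_mod_cast Nat.card_divisors_le_self n
    calc ((n.divisors.card : ℕ) : ℚ) * (7 * (n : ℚ) ^ 19) ≤ n * (7 * (n : ℚ) ^ 19) :=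
          mul_le_mul_of_nonneg_right hcard (by positivity)
      _ = 7 * (n : ℚ) ^ 20 := by ring
  have hpow : (0 : ℚ) < (n : ℚ) ^ 20 := by positivity
  have := (abs_le.1 hB).1
  rw [hsplit]
  nlinarith [mul_le_mul_of_nonneg_left hA hpow.le]

theorem ff_iff (n : ℕ) (hn : 2 ≤ n) : ff n = 0 ↔ ∃ p : ℕ, p.Prime ∧ n = p ^ 3 := by
  constructor
  · intro h
    by_contra hc
    by_cases hp : n.Prime
    · exact ff_prime n hp h
    · exact (ff_pos n hn hp hc).ne' h
  · rintro ⟨p, hp, rfl⟩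
    exact ff_cube p hp

theorem exists_int (i : ℕ) : ∃ (N : ℕ) (S : Finset (List ℕ+)) (c : List ℕ+ → ℤ), N ≠ 0 ∧
    ∀ n : ℕ, (N : ℚ) * ((n : ℚ) ^ i * ff n) = ∑ v ∈ S, (c v : ℚ) * (macM v n : ℚ) := by
  obtain ⟨c, hc⟩ := exists_of_mem_AA _ (BB_le_AA (ff_mem i))
  refine ⟨∏ v ∈ c.support, (c v).den, c.support,
    fun v => ((∏ v ∈ c.support, (c v).den : ℕ) / (c v).den : ℕ) * (c v).num, ?_, ?_⟩
  · exact Finset.prod_ne_zero_iff.2 fun v _ => (c v).den_nz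
  · intro n
    have := hc n
    rw [PowerSeries.coeff_mk] at this
    rw [this, Finsupp.sum, Finset.mul_sum]
    refine Finset.sum_congr rfl fun v hv => ?_
    obtain ⟨t, ht⟩ := Finset.dvd_prod_of_mem (fun v => (c v).den) hv
    dsimp only
    rw [ht, Nat.mul_div_cancel_left _ (c v).pos]
    push_cast
    rw [← Rat.mul_den_eq_num (c v)]
    ring

/-- There are infinitely many linearly independent integer linear combinations of
MacMahonesque functions of weight at most some `d ≥ 21` detecting the cubes of primes. -/
theorem infinitely_many_prime_cube_detectors :
    ∃ f : ℕ → (ℕ+ → ℚ),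
      LinearIndependent ℂ (fun i => fun n : ℕ+ => (f i n : ℂ)) ∧
      ∀ i : ℕ, ∃ d : ℕ, 21 ≤ d ∧
        ∃ (S : Finset (List ℕ+)) (c : List ℕ+ → ℤ),
          (∀ v ∈ S, weight v ≤ d) ∧
          (∀ n : ℕ+, f i n = ∑ v ∈ S, (c v : ℚ) * (macM v n : ℚ)) ∧
          (∀ n : ℕ+, 2 ≤ (n : ℕ) →
            (f i n = 0 ↔ ∃ p : ℕ, p.Prime ∧ (n : ℕ) = p ^ 3)) := by
  choose N S c hN h using exists_int
  refine ⟨fun i n => (N i : ℚ) * (((n : ℕ) : ℚ) ^ i * ff n), ?_, fun i =>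
    ⟨max 21 (∑ v ∈ S i, weight v), le_max_left _ _, S i, c i, ?_, ?_, ?_⟩⟩
  · rw [linearIndependent_iff']
    intro s g hg i hi
    set P : Polynomial ℂ := ∑ j ∈ s, Polynomial.monomial j (g j * N j) with hP
    have hroot : ∀ p ∈ {p : ℕ | p.Prime}, P.IsRoot (p : ℂ) := by
      intro p hp
      have h1 : ∑ j ∈ s, g j * (((N j : ℚ) * ((p : ℚ) ^ j * ff p) : ℚ) : ℂ) = 0 := by
        have h0 := congrFun hg (⟨p, Nat.Prime.pos hp⟩ : ℕ+)
        erw [Finset.sum_apply] at h0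
        exact h0
      have hne : ((ff p : ℚ) : ℂ) ≠ 0 := by exact_mod_cast ff_prime p hp
      rw [Polynomial.IsRoot, hP, Polynomial.eval_finsetSum]
      have h2 : (∑ j ∈ s, Polynomial.eval (p : ℂ) (Polynomial.monomial j (g j * N j))) *
          ((ff p : ℚ) : ℂ) = 0 := by
        rw [← h1, Finset.sum_mul]
        refine Finset.sum_congr rfl fun j _ => ?_
        rw [Polynomial.eval_monomial]
        push_cast
        ring
      exact (mul_eq_zero.1 h2).resolve_right hne
    have hP0 : P = 0 := by
      refine Polynomial.eq_zero_of_infinite_isRoot P ?_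
      refine Set.Infinite.mono (s := (fun p : ℕ => (p : ℂ)) '' {p : ℕ | p.Prime}) ?_ ?_
      · rintro _ ⟨p, hp, rfl⟩; exact hroot p hp
      · exact Nat.infinite_setOfPred_prime.image (Nat.cast_injective.injOn)
    have hcoeff : P.coeff i = g i * N i := by
      rw [hP, Polynomial.finsetSum_coeff]
      simp only [Polynomial.coeff_monomial]
      rw [Finset.sum_ite_eq', if_pos hi]
    rw [hP0, Polynomial.coeff_zero] at hcoeff
    exact (mul_eq_zero.1 hcoeff.symm).resolve_right (by exact_mod_cast hN i)
  · intro v hv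
    exact le_max_of_le_right (Finset.single_le_sum (f := weight) (fun _ _ => Nat.zero_le _) hv)
  · intro n
    exact h i n
  · intro n hn
    rw [← ff_iff n hn]
    have h1 : (N i : ℚ) ≠ 0 := by exact_mod_cast hN i
    have h2 : (((n : ℕ) : ℚ) ^ i) ≠ 0 := pow_ne_zero _ (by exact_mod_cast n.ne_zero)
    simp [h1, h2]
end

section
/- Let t ≥ 2 and 0 < r < t be integers with gcd(r, t) = 1, let ζ_t := e^{2πi/t}, and let k and ℓ be odd positive integers with ℓ > k. Then there exist complex constants c_{𝐚}(s), indexed by vectors 𝐚 of positive integers with |𝐚| ≤ k + 2ℓ and integers 0 ≤ s ≤ t − 1, only finitely many nonzero, such that for every positive integer n, b_{k,ℓ}^{r,t}(n) = Σ_{|𝐚| ≤ k+2ℓ} Σ_{s=0}^{t−1} c_{𝐚}(s)·ζ_t^{sn}·M_{𝐚}(n). -/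
open Complex

/-- The coefficient `b_{k,ℓ}^{r,t}(n)`. -/
def bFun (k l r t n : ℕ) : ℤ :=
  if n % t = r % t then
    ∑ d ∈ n.divisors, (((n : ℤ) ^ l + 1) * (d : ℤ) ^ k - ((n : ℤ) ^ k + 1) * (d : ℤ) ^ l)
  else
    ∑ d ∈ n.divisors, ((n : ℤ) ^ l + 1) * (d : ℤ) ^ k

namespace MacProof
open PowerSeries

/-- Polynomial functions with exponents in `J`. -/
noncomputable def polySpan (J : Set ℕ) : Submodule ℂ (ℕ → ℂ) :=
  Submodule.span ℂ ((fun j : ℕ => fun m : ℕ => (m : ℂ) ^ j) '' J)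

lemma pow_mem_polySpan {J : Set ℕ} {j : ℕ} (h : j ∈ J) :
    (fun m : ℕ => (m : ℂ) ^ j) ∈ polySpan J :=
  Submodule.subset_span ⟨j, h, rfl⟩

lemma polySpan_mono {J K : Set ℕ} (h : J ⊆ K) : polySpan J ≤ polySpan K :=
  Submodule.span_mono (Set.image_mono h)

lemma sum_range_pow_complex (n p : ℕ) :
    (∑ k ∈ Finset.range n, (k : ℂ) ^ p) =
      ∑ i ∈ Finset.range (p + 1),
        ((bernoulli i : ℂ) * ((p + 1).choose i : ℂ) / (p + 1)) * (n : ℂ) ^ (p + 1 - i) := by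
  have h := congrArg (fun x : ℚ => (x : ℂ)) (sum_range_pow n p)
  push_cast at h
  rw [h]
  refine Finset.sum_congr rfl fun i _ => ?_
  ring

lemma sum_pow_mem (b : ℕ) :
    (fun m : ℕ => ∑ i ∈ Finset.range m, (i : ℂ) ^ b) ∈ polySpan (Set.Icc 1 (b + 1)) := by
  have : (fun m : ℕ => ∑ i ∈ Finset.range m, (i : ℂ) ^ b) =
      ∑ i ∈ Finset.range (b + 1), ((bernoulli i : ℂ) * ((b + 1).choose i : ℂ) / (b + 1)) •
        (fun m : ℕ => (m : ℂ) ^ (b + 1 - i)) := by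
    funext m
    rw [sum_range_pow_complex]
    simp
  rw [this]
  refine Submodule.sum_mem _ fun i hi => Submodule.smul_mem _ _ (pow_mem_polySpan ?_)
  have := Finset.mem_range.1 hi
  constructor <;> omega

lemma sum_pow_odd_mem (p : ℕ) (hp : Even p) (hp2 : 2 ≤ p) :
    (fun m : ℕ => (m : ℂ) ^ p + 2 * ∑ i ∈ Finset.range m, (i : ℂ) ^ p) ∈
      polySpan {j | Odd j ∧ j ≤ p + 1} := by
  have : (fun m : ℕ => (m : ℂ) ^ p + 2 * ∑ i ∈ Finset.range m, (i : ℂ) ^ p) =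
      ∑ i ∈ (Finset.range (p + 1)).erase 1,
        (2 * ((bernoulli i : ℂ) * ((p + 1).choose i : ℂ) / (p + 1))) •
        (fun m : ℕ => (m : ℂ) ^ (p + 1 - i)) := by
    funext m
    rw [sum_range_pow_complex, ← Finset.add_sum_erase _ _ (show 1 ∈ Finset.range (p + 1) by
      simp; omega)]
    have h1 : ((p : ℂ) + 1) ≠ 0 := by exact_mod_cast Nat.succ_ne_zero p
    simp [Finset.mul_sum, mul_add, mul_assoc]
    field_simp
    try simp
    try ring
  rw [this]
  refine Submodule.sum_mem _ fun i hi => ?_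
  have hi' := Finset.mem_erase.1 hi
  have hi2 := Finset.mem_range.1 hi'.2
  rcases Nat.even_or_odd i with he | ho
  · refine Submodule.smul_mem _ _ (pow_mem_polySpan ⟨?_, by omega⟩)
    rcases he with ⟨a, rfl⟩
    rcases hp with ⟨b, rfl⟩
    exact ⟨b - a, by omega⟩
  · rw [bernoulli_eq_zero_of_odd ho (by have := ho.pos; omega)]
    simp

lemma mul_id_mem {d : ℕ} {f : ℕ → ℂ} (hf : f ∈ polySpan (Set.Icc 1 d)) :
    (fun m : ℕ => (m : ℂ) * f m) ∈ polySpan (Set.Icc 1 (d + 1)) := by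
  unfold polySpan at hf
  induction hf using Submodule.span_induction with
  | mem x hx =>
    obtain ⟨j, hj, rfl⟩ := hx
    have := pow_mem_polySpan (J := Set.Icc 1 (d + 1)) (j := j + 1) ⟨by omega, by have := hj.2; omega⟩
    simpa [pow_succ'] using this
  | zero =>
    have := Submodule.zero_mem (polySpan (Set.Icc 1 (d + 1)))
    convert this using 1
    funext m
    simp
  | add x y _ _ hx hy => simpa [mul_add] using! Submodule.add_mem _ hx hy
  | smul c x _ hx =>
    have := Submodule.smul_mem _ c hx
    convert this using 1
    funext m
    simp
    ring

lemma conv_pow_mem (a b : ℕ) (hb : 1 ≤ b) :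
    (fun m : ℕ => ∑ p ∈ Finset.HasAntidiagonal.antidiagonal m, (p.1 : ℂ) ^ a * (p.2 : ℂ) ^ b) ∈
      polySpan (Set.Icc 1 (a + b + 1)) := by
  induction a generalizing b with
  | zero =>
    have h : (fun m : ℕ => ∑ p ∈ Finset.HasAntidiagonal.antidiagonal m, (p.1 : ℂ) ^ 0 * (p.2 : ℂ) ^ b) =
        (fun m : ℕ => ∑ i ∈ Finset.range m, (i : ℂ) ^ b) + fun m : ℕ => (m : ℂ) ^ b := by
      funext m
      rw [Finset.Nat.sum_antidiagonal_swap.symm,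
        Finset.Nat.sum_antidiagonal_eq_sum_range_succ_mk]
      simp [Finset.sum_range_succ]
    rw [h]
    refine Submodule.add_mem _ ?_ (pow_mem_polySpan ⟨hb, by omega⟩)
    simpa using sum_pow_mem b
  | succ a ih =>
    have h : (fun m : ℕ => ∑ p ∈ Finset.HasAntidiagonal.antidiagonal m, (p.1 : ℂ) ^ (a + 1) * (p.2 : ℂ) ^ b) =
        (fun m : ℕ => (m : ℂ) * ∑ p ∈ Finset.HasAntidiagonal.antidiagonal m, (p.1 : ℂ) ^ a * (p.2 : ℂ) ^ b) -
        fun m : ℕ => ∑ p ∈ Finset.HasAntidiagonal.antidiagonal m, (p.1 : ℂ) ^ a * (p.2 : ℂ) ^ (b + 1) := by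
      funext m
      simp only [Pi.sub_apply]
      rw [Finset.mul_sum, ← Finset.sum_sub_distrib]
      refine Finset.sum_congr rfl fun p hp => ?_
      have : (m : ℂ) = p.1 + p.2 := by exact_mod_cast (Finset.HasAntidiagonal.mem_antidiagonal.1 hp).symm
      rw [this]
      ring
    rw [h]
    refine Submodule.sub_mem _ ?_ ?_
    · have := mul_id_mem (ih b hb)
      refine polySpan_mono ?_ this
      exact Set.Icc_subset_Icc le_rfl (by omega)
    · refine polySpan_mono ?_ (ih (b + 1) (by omega))
      exact Set.Icc_subset_Icc le_rfl (by omega)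

/-- Lambert-type series attached to a function. -/
noncomputable def lam : (ℕ → ℂ) →ₗ[ℂ] (ℕ → ℂ⟦X⟧) where
  toFun f s := PowerSeries.mk fun n => if s ∣ n then f (n / s) else 0
  map_add' f g := by
    funext s; ext n; simp only [coeff_mk, Pi.add_apply, map_add]; split_ifs <;> simp
  map_smul' c f := by
    funext s; ext n; simp [coeff_mk]

/-- The series `∑ m^a q^(m s)`. -/
noncomputable def L (a : ℕ) : ℕ → ℂ⟦X⟧ := lam fun m => (m : ℂ) ^ a

lemma coeff_L (a s n : ℕ) : coeff n (L a s) = if s ∣ n then ((n / s : ℕ) : ℂ) ^ a else 0 := by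
  simp [L, lam]

lemma L_mul (a b : ℕ) (ha : 1 ≤ a) : L a * L b =
    lam (fun m : ℕ => ∑ p ∈ Finset.HasAntidiagonal.antidiagonal m, (p.1 : ℂ) ^ a * (p.2 : ℂ) ^ b) := by
  funext s
  ext n
  rw [Pi.mul_apply, coeff_mul]
  simp only [coeff_L]
  simp only [lam, LinearMap.coe_mk, AddHom.coe_mk, coeff_mk]
  rcases Nat.eq_zero_or_pos s with rfl | hs
  · simp only [Nat.div_zero]
    split_ifs with h <;> simp [show a ≠ 0 by omega]
  split_ifs with h
  · obtain ⟨m, rfl⟩ := h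
    rw [Nat.mul_div_cancel_left m hs]
    symm
    refine Finset.sum_bij_ne_zero (fun p _ _ => (s * p.1, s * p.2)) ?_ ?_ ?_ ?_
    · intro p hp _
      rw [Finset.HasAntidiagonal.mem_antidiagonal] at hp ⊢
      simp [← hp, mul_add]
    · intro p _ _ q _ _ h
      simp only [Prod.mk.injEq, mul_eq_mul_left_iff] at h
      ext <;> omega
    · intro p hp hne
      have h1 : s ∣ p.1 := by by_contra h; simp [h] at hne
      have h2 : s ∣ p.2 := by by_contra h; simp [h] at hne
      obtain ⟨u, hu⟩ := h1
      obtain ⟨v, hv⟩ := h2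
      refine ⟨(u, v), ?_, ?_, ?_⟩
      · rw [Finset.HasAntidiagonal.mem_antidiagonal] at hp ⊢
        simp only
        rw [hu, hv, ← mul_add] at hp
        exact Nat.eq_of_mul_eq_mul_left hs hp
      · simpa [hu, hv, Nat.mul_div_cancel_left _ hs] using hne
      · simp [← hu, ← hv]
    · intro p _ _
      simp [Nat.mul_div_cancel_left _ hs]
  · refine Finset.sum_eq_zero fun p hp => ?_
    by_cases h1 : s ∣ p.1
    · by_cases h2 : s ∣ p.2
      · exact absurd ((Finset.HasAntidiagonal.mem_antidiagonal.1 hp) ▸ dvd_add h1 h2) h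
      · simp [h2]
    · simp [h1]

/-- The nested-sum operator. -/
noncomputable def ncons (g : ℕ → ℂ⟦X⟧) (f : ℕ → ℕ → ℂ⟦X⟧) : ℕ → ℕ → ℂ⟦X⟧ :=
  fun S N => ∑ s ∈ Finset.Icc 1 S, if N < s then g s * f S s else 0

noncomputable def nconsL : (ℕ → ℂ⟦X⟧) →ₗ[ℂ] (ℕ → ℕ → ℂ⟦X⟧) →ₗ[ℂ] (ℕ → ℕ → ℂ⟦X⟧) :=
  LinearMap.mk₂ ℂ ncons
    (by intro g h f; funext S N; simp only [ncons, Pi.add_apply, ← Finset.sum_add_distrib]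
        refine Finset.sum_congr rfl fun s _ => ?_
        split_ifs <;> simp [add_mul])
    (by intro c g f; funext S N; simp only [ncons, Pi.smul_apply, Finset.smul_sum]
        refine Finset.sum_congr rfl fun s _ => ?_
        split_ifs <;> simp)
    (by intro g h f; funext S N; simp only [ncons, Pi.add_apply, ← Finset.sum_add_distrib]
        refine Finset.sum_congr rfl fun s _ => ?_
        split_ifs <;> simp [mul_add])
    (by intro c g f; funext S N; simp only [ncons, Pi.smul_apply, Finset.smul_sum]
        refine Finset.sum_congr rfl fun s _ => ?_
        split_ifs <;> simp)

lemma nconsL_apply (g f) : nconsL g f = ncons g f := rfl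

lemma ncons_mul (g h : ℕ → ℂ⟦X⟧) (f : ℕ → ℕ → ℂ⟦X⟧) :
    ncons g 1 * ncons h f =
      ncons g (ncons h f) + ncons (g * h) f + ncons h (ncons g 1 * f) := by
  funext S N
  simp only [ncons, Pi.mul_apply, Pi.add_apply, Pi.one_apply, mul_one]
  rw [Finset.sum_mul_sum]
  have e1 : (∑ s ∈ Finset.Icc 1 S, if N < s then g s *
      ∑ s' ∈ Finset.Icc 1 S, (if s < s' then h s' * f S s' else 0) else 0) =
      ∑ s ∈ Finset.Icc 1 S, ∑ s' ∈ Finset.Icc 1 S,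
        if N < s ∧ s < s' then g s * h s' * f S s' else 0 := by
    refine Finset.sum_congr rfl fun s _ => ?_
    by_cases hs : N < s
    · simp only [hs, if_true, true_and, Finset.mul_sum, mul_ite, mul_zero, mul_assoc]
    · simp [hs]
  have e2 : (∑ s ∈ Finset.Icc 1 S, if N < s then g s * h s * f S s else 0) =
      ∑ s ∈ Finset.Icc 1 S, ∑ s' ∈ Finset.Icc 1 S,
        if N < s ∧ s = s' then g s * h s' * f S s' else 0 := by
    refine Finset.sum_congr rfl fun s hs' => ?_
    by_cases hs : N < s
    · simp only [hs, if_true, true_and, Finset.sum_ite_eq, hs']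
    · simp [hs]
  have e3 : (∑ s' ∈ Finset.Icc 1 S, if N < s' then h s' *
      ((∑ s ∈ Finset.Icc 1 S, if s' < s then g s else 0) * f S s') else 0) =
      ∑ s ∈ Finset.Icc 1 S, ∑ s' ∈ Finset.Icc 1 S,
        if N < s' ∧ s' < s then g s * h s' * f S s' else 0 := by
    rw [Finset.sum_comm]
    refine Finset.sum_congr rfl fun s _ => ?_
    by_cases hs : N < s
    · simp only [hs, if_true, true_and, Finset.sum_mul, Finset.mul_sum]
      refine Finset.sum_congr rfl fun s' _ => ?_
      split_ifs
      · ring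
      · simp
    · simp [hs]
  rw [e1, e2, e3, ← Finset.sum_add_distrib, ← Finset.sum_add_distrib]
  refine Finset.sum_congr rfl fun s _ => ?_
  rw [← Finset.sum_add_distrib, ← Finset.sum_add_distrib]
  refine Finset.sum_congr rfl fun s' _ => ?_
  rcases lt_trichotomy s s' with hlt | heq | hgt
  · by_cases hN : N < s
    · simp [hN, hlt, hN.trans hlt, hlt.ne, hlt.not_gt, mul_assoc]
    · simp [hN, hlt.ne, hlt.not_gt]
  · subst heq
    by_cases hN : N < s <;> simp [hN, mul_assoc]
  · by_cases hN : N < s'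
    · simp [hN, hgt, hN.trans hgt, hgt.ne', hgt.not_gt, mul_assoc]
    · simp [hN, hgt.ne', hgt.not_gt]

noncomputable def A : List ℕ+ → ℕ → ℕ → ℂ⟦X⟧
  | [] => 1
  | v :: vs => ncons (L v) (A vs)

def W (v : List ℕ+) : ℕ := (v.map fun x => (x : ℕ) + 1).sum

lemma W_cons (a : ℕ+) (v : List ℕ+) : W (a :: v) = (a : ℕ) + 1 + W v := by simp [W]

noncomputable def E (w : ℕ) : Submodule ℂ (ℕ → ℕ → ℂ⟦X⟧) :=
  Submodule.span ℂ (A '' {v | W v ≤ w})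

lemma A_mem {v : List ℕ+} {w : ℕ} (h : W v ≤ w) : A v ∈ E w :=
  Submodule.subset_span ⟨v, h, rfl⟩

lemma ncons_L_mem (a : ℕ+) {w w' : ℕ} (h : (a : ℕ) + 1 + w ≤ w') {f} (hf : f ∈ E w) :
    ncons (L a) f ∈ E w' := by
  have : E w ≤ (E w').comap (nconsL (L a)) := by
    rw [E, Submodule.span_le]
    rintro _ ⟨v, hv, rfl⟩
    simp only [Submodule.comap_coe, Set.mem_preimage, nconsL_apply]
    exact A_mem (v := a :: v) (by have h2 : W v ≤ w := hv; rw [W_cons]; omega)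
  exact this hf

lemma ncons_poly_mem {f : ℕ → ℂ} {d : ℕ} (hf : f ∈ polySpan (Set.Icc 1 d)) (v : List ℕ+)
    {w : ℕ} (h : d + 1 + W v ≤ w) : ncons (lam f) (A v) ∈ E w := by
  have : polySpan (Set.Icc 1 d) ≤ (E w).comap ((nconsL.flip (A v)).comp lam) := by
    rw [polySpan, Submodule.span_le]
    rintro _ ⟨j, hj, rfl⟩
    simp only [Submodule.comap_coe, Set.mem_preimage]
    have hj1 : 0 < j := hj.1
    have := A_mem (v := (j.toPNat hj1) :: v) (w := w) (by
      have := hj.2; rw [W_cons]; change j + 1 + W v ≤ w; omega)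
    exact this
  exact this hf

lemma stuffle (a : ℕ+) (v : List ℕ+) : A [a] * A v ∈ E ((a : ℕ) + 1 + W v) := by
  induction v with
  | nil => 
    simp only [A, mul_one]
    exact A_mem (v := [a]) (by simp [W])
  | cons b v ih =>
    have : A [a] * A (b :: v) = ncons (L a) (ncons (L b) (A v)) + ncons (L a * L b) (A v) +
        ncons (L b) (A [a] * A v) := ncons_mul _ _ _
    rw [this]
    refine Submodule.add_mem _ (Submodule.add_mem _ ?_ ?_) ?_
    · exact A_mem (v := a :: b :: v) (by simp [W_cons])
    · rw [L_mul _ _ a.pos]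
      exact ncons_poly_mem (conv_pow_mem a b b.pos) v (by rw [W_cons]; omega)
    · exact ncons_L_mem b (by rw [W_cons]; omega) ih

/-- Truncated version of `L`. -/
noncomputable def LK (K a s : ℕ) : ℂ⟦X⟧ :=
  ∑ m ∈ Finset.Icc 1 K, C ((m : ℂ) ^ a) * X ^ (m * s)

noncomputable def AK (K : ℕ) : List ℕ+ → ℕ → ℕ → ℂ⟦X⟧
  | [] => 1
  | v :: vs => ncons (LK K v) (AK K vs)

lemma L_congr (K a s : ℕ) (ha : 1 ≤ a) (hs : 1 ≤ s) :
    (X : ℂ⟦X⟧) ^ (K + 1) ∣ L a s - LK K a s := by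
  rw [X_pow_dvd_iff]
  intro i hi
  rw [map_sub, coeff_L, LK, map_sum]
  simp only [coeff_C_mul, coeff_X_pow, mul_ite, mul_one, mul_zero]
  rw [sub_eq_zero]
  split_ifs with h
  · obtain ⟨m, rfl⟩ := h
    rw [Nat.mul_div_cancel_left m hs]
    have : ∀ x : ℕ, s * m = x * s ↔ m = x := by
      intro x
      rw [mul_comm x s]
      exact Nat.mul_right_inj (by omega)
    simp only [this, Finset.sum_ite_eq, Finset.mem_Icc]
    split_ifs with h2
    · rfl
    · have : m ≤ s * m := Nat.le_mul_of_pos_left m hs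
      have : m = 0 := by omega
      subst this
      simp; omega
  · symm
    refine Finset.sum_eq_zero fun m _ => ?_
    rw [if_neg]
    rintro rfl
    exact h (dvd_mul_left _ _)

lemma dvd_mul_sub {d f f' g g' : ℂ⟦X⟧} (h : d ∣ f - g) (h' : d ∣ f' - g') :
    d ∣ f * f' - g * g' := by
  have : f * f' - g * g' = f * (f' - g') + (f - g) * g' := by ring
  rw [this]
  exact dvd_add (Dvd.dvd.mul_left h' _) (Dvd.dvd.mul_right h _)

lemma A_congr (K : ℕ) (v : List ℕ+) (S N : ℕ) :
    (X : ℂ⟦X⟧) ^ (K + 1) ∣ A v S N - AK K v S N := by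
  induction v generalizing N with
  | nil => simp [A, AK]
  | cons a v ih =>
    simp only [A, AK, ncons]
    rw [← Finset.sum_sub_distrib]
    refine Finset.dvd_sum fun s hs => ?_
    split_ifs
    · exact dvd_mul_sub (L_congr K a s a.pos (Finset.mem_Icc.1 hs).1) (ih s)
    · simp

lemma X_pow_dvd_L (a s : ℕ) (ha : 1 ≤ a) : (X : ℂ⟦X⟧) ^ s ∣ L a s := by
  rw [X_pow_dvd_iff]
  intro i hi
  rw [coeff_L]
  split_ifs with h
  · rw [Nat.eq_zero_of_dvd_of_lt h hi]
    simp; omega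
  · rfl

lemma A_stab (v : List ℕ+) (S S' N : ℕ) (h : S ≤ S') :
    (X : ℂ⟦X⟧) ^ (S + 1) ∣ A v S' N - A v S N := by
  induction v generalizing N with
  | nil => simp [A]
  | cons a v ih =>
    simp only [A, ncons]
    rw [← Finset.sum_sdiff (Finset.Icc_subset_Icc_right (a := 1) h), add_sub_assoc,
      ← Finset.sum_sub_distrib]
    refine dvd_add (Finset.dvd_sum fun s hs => ?_) (Finset.dvd_sum fun s hs => ?_)
    · split_ifs
      · refine Dvd.dvd.mul_right (dvd_trans (pow_dvd_pow _ ?_) (X_pow_dvd_L a s a.pos)) _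
        simp at hs; omega
      · simp
    · split_ifs
      · rw [← mul_sub]
        exact Dvd.dvd.mul_left (ih s) _
      · simp

lemma AK_eq (K : ℕ) (v : List ℕ+) (S N : ℕ) : AK K v S N =
    ∑ sm ∈ Fintype.piFinset fun _ : Fin v.length => Finset.Icc 1 S ×ˢ Finset.Icc 1 K,
      if (∀ i, N < (sm i).1) ∧ (∀ i j : Fin v.length, i < j → (sm i).1 < (sm j).1) then
        ∏ i : Fin v.length, (C (((sm i).2 : ℂ) ^ (v.get i : ℕ)) * X ^ ((sm i).2 * (sm i).1) : ℂ⟦X⟧)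
      else 0 := by
  induction v generalizing N with
  | nil => 
    simp [AK]
  | cons a v ih =>
    simp only [AK, ncons]
    have e1 : ∀ s, (if N < s then LK K a s * AK K v S s else 0) = ∑ m ∈ Finset.Icc 1 K,
        if N < s then C ((m : ℂ) ^ (a : ℕ)) * X ^ (m * s) * AK K v S s else 0 := by
      intro s
      split_ifs
      · rw [LK, Finset.sum_mul]
      · simp
    simp only [e1]
    simp only [ih]
    rw [← Finset.sum_product' (f := fun (s m : ℕ) => if N < s then C ((m : ℂ) ^ (a : ℕ)) * X ^ (m * s) *
      (∑ sm ∈ Fintype.piFinset fun _ : Fin v.length => Finset.Icc 1 S ×ˢ Finset.Icc 1 K,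
      if (∀ i, s < (sm i).1) ∧ (∀ i j : Fin v.length, i < j → (sm i).1 < (sm j).1) then
        ∏ i : Fin v.length, (C (((sm i).2 : ℂ) ^ (v.get i : ℕ)) * X ^ ((sm i).2 * (sm i).1) : ℂ⟦X⟧)
      else 0) else 0)]
    have e2 : ∀ (p : ℕ × ℕ), (if N < p.1 then C ((p.2 : ℂ) ^ (a : ℕ)) * X ^ (p.2 * p.1) *
      (∑ sm ∈ Fintype.piFinset fun _ : Fin v.length => Finset.Icc 1 S ×ˢ Finset.Icc 1 K,
      if (∀ i, p.1 < (sm i).1) ∧ (∀ i j : Fin v.length, i < j → (sm i).1 < (sm j).1) then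
        ∏ i : Fin v.length, (C (((sm i).2 : ℂ) ^ (v.get i : ℕ)) * X ^ ((sm i).2 * (sm i).1) : ℂ⟦X⟧)
      else 0) else 0) =
      ∑ sm ∈ Fintype.piFinset fun _ : Fin v.length => Finset.Icc 1 S ×ˢ Finset.Icc 1 K,
      if N < p.1 ∧ (∀ i, p.1 < (sm i).1) ∧
          (∀ i j : Fin v.length, i < j → (sm i).1 < (sm j).1) then
        C ((p.2 : ℂ) ^ (a : ℕ)) * X ^ (p.2 * p.1) *
        ∏ i : Fin v.length, (C (((sm i).2 : ℂ) ^ (v.get i : ℕ)) * X ^ ((sm i).2 * (sm i).1) : ℂ⟦X⟧)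
      else 0 := by
      intro p
      by_cases hp : N < p.1
      · simp only [hp, if_true, true_and, Finset.mul_sum, mul_ite, mul_zero]
      · simp [hp]
    rw [Finset.sum_congr rfl fun p _ => e2 p]
    rw [← Finset.sum_product']
    refine Finset.sum_nbij' (fun q => Fin.cons (α := fun _ => ℕ × ℕ) q.1 q.2)
      (fun sm => (sm 0, fun i => sm i.succ)) ?_ ?_ ?_ ?_ ?_
    · rintro ⟨p, sm⟩ h
      rw [Finset.mem_product, Fintype.mem_piFinset] at h
      rw [Fintype.mem_piFinset]
      intro i
      refine Fin.cases ?_ (fun i => ?_) i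
      · exact h.1
      · exact h.2 i
    · intro sm h
      rw [Fintype.mem_piFinset] at h
      rw [Finset.mem_product, Fintype.mem_piFinset]
      exact ⟨h _, fun i => h _⟩
    · rintro ⟨p, sm⟩ h
      rfl
    · intro sm h
      funext i
      refine Fin.cases ?_ (fun i => ?_) i <;> rfl
    · rintro ⟨p, sm⟩ h
      have hiff : (N < p.1 ∧ (∀ i, p.1 < (sm i).1) ∧
          (∀ i j : Fin v.length, i < j → (sm i).1 < (sm j).1)) ↔
          ((∀ i, N < ((Fin.cons p sm : Fin (v.length + 1) → ℕ × ℕ) i).1) ∧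
          (∀ i j : Fin (v.length + 1), i < j →
            ((Fin.cons p sm : Fin (v.length + 1) → ℕ × ℕ) i).1 <
            ((Fin.cons p sm : Fin (v.length + 1) → ℕ × ℕ) j).1)) := by
        simp only [Fin.forall_fin_succ, Fin.cons_zero, Fin.cons_succ, Fin.succ_lt_succ_iff,
          Fin.succ_pos, Fin.not_lt_zero, true_and,
          false_imp_iff, forall_const]
        constructor
        · rintro ⟨h1, h2, h3⟩
          exact ⟨⟨h1, fun i => h1.trans (h2 i)⟩, h2, h3⟩
        · rintro ⟨⟨h1, _⟩, h2, h3⟩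
          exact ⟨h1, h2, h3⟩
      refine if_congr hiff ?_ rfl
      symm
      exact Fin.prod_univ_succ (n := v.length) _

/-- The generating function of `macM v`. -/
noncomputable def U (v : List ℕ+) : ℂ⟦X⟧ := PowerSeries.mk fun n => (macM v n : ℂ)

lemma coeff_AK (v : List ℕ+) (n : ℕ) : coeff n (AK n v n 0) = (macM v n : ℂ) := by
  rw [AK_eq, macM, map_sum, Nat.cast_sum]
  refine Finset.sum_congr rfl fun sm hsm => ?_
  have h0 : ∀ i, 0 < (sm i).1 := by
    intro i
    have := Fintype.mem_piFinset.1 hsm i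
    simp at this
    omega
  simp only [h0, implies_true, true_and]
  by_cases h : ∀ i j : Fin v.length, i < j → (sm i).1 < (sm j).1
  · rw [if_pos h, Finset.prod_mul_distrib, Finset.prod_pow_eq_pow_sum, ← map_prod, coeff_C_mul,
      coeff_X_pow]
    split_ifs with h1 h2 h2
    · simp
    · exact absurd ⟨h, h1⟩ h2
    · exact absurd h2.2 h1
    · simp
  · rw [if_neg h, if_neg (fun h' => h h'.1)]
    simp

lemma coeff_eq_of_dvd {K n : ℕ} {f g : ℂ⟦X⟧} (h : (X : ℂ⟦X⟧) ^ (K + 1) ∣ f - g) (hn : n ≤ K) :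
    coeff n f = coeff n g := by
  rw [X_pow_dvd_iff] at h
  have := h n (by omega)
  rwa [map_sub, sub_eq_zero] at this

lemma coeff_U (v : List ℕ+) (n S : ℕ) (h : n ≤ S) : coeff n (U v) = coeff n (A v S 0) := by
  rw [coeff_eq_of_dvd (A_stab v n S 0 h) le_rfl, coeff_eq_of_dvd (A_congr n v n 0) le_rfl, coeff_AK]
  simp [U]

noncomputable def limL : (ℕ → ℕ → ℂ⟦X⟧) →ₗ[ℂ] ℂ⟦X⟧ where
  toFun f := PowerSeries.mk fun n => coeff n (f n 0)
  map_add' f g := by ext n; simp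
  map_smul' c f := by ext n; simp

lemma limL_A (v) : limL (A v) = U v := by
  ext n
  rw [coeff_U v n n le_rfl]
  simp [limL]

lemma limL_mul (u v) : limL (A u * A v) = U u * U v := by
  ext n
  rw [coeff_mul]
  simp only [limL, LinearMap.coe_mk, AddHom.coe_mk, coeff_mk, Pi.mul_apply]
  rw [coeff_mul]
  refine Finset.sum_congr rfl fun p hp => ?_
  have := Finset.HasAntidiagonal.mem_antidiagonal.1 hp
  rw [coeff_U u p.1 n (by omega), coeff_U v p.2 n (by omega)]

noncomputable def F (w : ℕ) : Submodule ℂ ℂ⟦X⟧ := Submodule.span ℂ (U '' {v | W v ≤ w})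

lemma U_mem {v : List ℕ+} {w : ℕ} (h : W v ≤ w) : U v ∈ F w :=
  Submodule.subset_span ⟨v, h, rfl⟩

lemma F_mono {w w' : ℕ} (h : w ≤ w') : F w ≤ F w' :=
  Submodule.span_mono (Set.image_mono fun _ hv => le_trans hv h)

lemma limL_mem {w : ℕ} {f} (hf : f ∈ E w) : limL f ∈ F w := by
  have : E w ≤ (F w).comap limL := by
    rw [E, Submodule.span_le]
    rintro _ ⟨v, hv, rfl⟩
    simp only [Submodule.comap_coe, Set.mem_preimage, limL_A]
    exact U_mem hv
  exact this hf

lemma U_mul_mem (a : ℕ+) {w : ℕ} {f} (hf : f ∈ F w) : U [a] * f ∈ F ((a : ℕ) + 1 + w) := by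
  have : F w ≤ (F ((a : ℕ) + 1 + w)).comap (LinearMap.mulLeft ℂ (U [a])) := by
    rw [F, Submodule.span_le]
    rintro _ ⟨v, hv, rfl⟩
    simp only [Submodule.comap_coe, Set.mem_preimage, LinearMap.mulLeft_apply]
    rw [← limL_mul]
    refine F_mono ?_ (limL_mem (stuffle a v))
    have : W v ≤ w := hv
    omega
  exact this hf

/-- Divisor-sum transform. -/
noncomputable def divT : (ℕ → ℂ) →ₗ[ℂ] ℂ⟦X⟧ where
  toFun f := PowerSeries.mk fun n => ∑ d ∈ n.divisors, f d
  map_add' f g := by ext n; simp [Finset.sum_add_distrib]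
  map_smul' c f := by ext n; simp [Finset.mul_sum]

noncomputable def V (a : ℕ) : ℂ⟦X⟧ := divT fun d => (d : ℂ) ^ a

lemma coeff_V (a n : ℕ) : coeff n (V a) = ∑ d ∈ n.divisors, (d : ℂ) ^ a := by simp [V, divT]

lemma U_single (a : ℕ+) : U [a] = V a := by
  ext n
  rw [coeff_U [a] n n le_rfl, coeff_V]
  simp only [A, ncons, Pi.one_apply, mul_one, map_sum]
  rw [← Nat.sum_div_divisors, Nat.divisors, Finset.sum_filter]
  refine Finset.sum_congr (by ext; simp) fun s hs => ?_
  have : 0 < s := by simp at hs; omega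
  simp [this, coeff_L]

lemma one_mem_F : (1 : ℂ⟦X⟧) ∈ F 0 := by
  have h : (1 : ℂ⟦X⟧) = U [] := by
    rw [← limL_A]
    ext n
    simp [limL, A]
  rw [h]
  exact U_mem (by simp [W])

/-- Quadruples `(a, x, b, y)` of positive integers with `a x + b y = n`. -/
def Q (n : ℕ) : Finset (ℕ × ℕ × ℕ × ℕ) :=
  (Finset.range (n + 1) ×ˢ Finset.range (n + 1) ×ˢ Finset.range (n + 1) ×ˢ
    Finset.range (n + 1)).filter fun q =>
      0 < q.1 ∧ 0 < q.2.1 ∧ 0 < q.2.2.1 ∧ 0 < q.2.2.2 ∧ q.1 * q.2.1 + q.2.2.1 * q.2.2.2 = n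

lemma mem_Q {n a x b y : ℕ} :
    (a, x, b, y) ∈ Q n ↔ 0 < a ∧ 0 < x ∧ 0 < b ∧ 0 < y ∧ a * x + b * y = n := by
  simp only [Q, Finset.mem_filter, Finset.mem_product, Finset.mem_range]
  constructor
  · exact fun h => h.2
  · rintro ⟨ha, hx, hb, hy, h⟩
    have h1 : a ≤ a * x := Nat.le_mul_of_pos_right a hx
    have h2 : x ≤ a * x := Nat.le_mul_of_pos_left x ha
    have h3 : b ≤ b * y := Nat.le_mul_of_pos_right b hy
    have h4 : y ≤ b * y := Nat.le_mul_of_pos_left y hb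
    exact ⟨⟨by omega, by omega, by omega, by omega⟩, ha, hx, hb, hy, h⟩

lemma Q_swap (n : ℕ) (g : ℕ × ℕ × ℕ × ℕ → ℂ) :
    ∑ q ∈ Q n, g q = ∑ q ∈ Q n, g (q.2.2.1, q.2.2.2, q.1, q.2.1) := by
  refine Finset.sum_nbij' (fun q => (q.2.2.1, q.2.2.2, q.1, q.2.1))
    (fun q => (q.2.2.1, q.2.2.2, q.1, q.2.1)) ?_ ?_ ?_ ?_ ?_
  · rintro ⟨a, x, b, y⟩ h
    rw [mem_Q] at h ⊢
    exact ⟨h.2.2.1, h.2.2.2.1, h.1, h.2.1, by dsimp only; omega⟩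
  · rintro ⟨a, x, b, y⟩ h
    rw [mem_Q] at h ⊢
    exact ⟨h.2.2.1, h.2.2.2.1, h.1, h.2.1, by dsimp only; omega⟩
  · intros; rfl
  · intros; rfl
  · intros; rfl

lemma Q_conj (n : ℕ) (G : ℕ → ℕ → ℂ) :
    ∑ q ∈ Q n, (if q.2.2.2 < q.2.1 then G q.1 q.2.2.1 else 0) =
      ∑ q ∈ Q n, (if q.2.2.1 < q.1 then G q.2.2.1 (q.1 - q.2.2.1) else 0) := by
  rw [← Finset.sum_filter, ← Finset.sum_filter]
  refine Finset.sum_nbij' (fun q => (q.1 + q.2.2.1, q.2.2.2, q.1, q.2.1 - q.2.2.2))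
    (fun q => (q.2.2.1, q.2.1 + q.2.2.2, q.1 - q.2.2.1, q.2.1)) ?_ ?_ ?_ ?_ ?_
  · rintro ⟨a, x, b, y⟩ h
    rw [Finset.mem_filter, mem_Q] at h ⊢
    obtain ⟨⟨ha, hx, hb, hy, h⟩, hlt⟩ := h
    dsimp only at *
    obtain ⟨z, rfl⟩ := Nat.exists_eq_add_of_lt hlt
    refine ⟨⟨by omega, hy, ha, by omega, ?_⟩, by omega⟩
    rw [← h, show y + z + 1 - y = z + 1 by omega]
    ring
  · rintro ⟨a, x, b, y⟩ h
    rw [Finset.mem_filter, mem_Q] at h ⊢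
    obtain ⟨⟨ha, hx, hb, hy, h⟩, hlt⟩ := h
    dsimp only at *
    obtain ⟨z, rfl⟩ := Nat.exists_eq_add_of_lt hlt
    refine ⟨⟨hb, by omega, by omega, by omega, ?_⟩, by omega⟩
    rw [← h, show b + z + 1 - b = z + 1 by omega]
    ring
  · rintro ⟨a, x, b, y⟩ h
    rw [Finset.mem_filter, mem_Q] at h
    have h1 : y < x := h.2
    change (a, y + (x - y), a + b - a, y) = (a, x, b, y)
    rw [show y + (x - y) = x by omega, show a + b - a = b by omega]
  · rintro ⟨a, x, b, y⟩ h
    rw [Finset.mem_filter, mem_Q] at h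
    have h1 : b < a := h.2
    change (b + (a - b), x, b, x + y - x) = (a, x, b, y)
    rw [show b + (a - b) = a by omega, show x + y - x = y by omega]
  · rintro ⟨a, x, b, y⟩ h
    simp

lemma Q_diag (n : ℕ) (H : ℕ → ℕ → ℕ → ℂ) :
    ∑ q ∈ Q n, (if q.2.1 = q.2.2.2 then H q.1 q.2.2.1 q.2.1 else 0) =
      ∑ d ∈ n.divisors, ∑ i ∈ Finset.Ico 1 d, H i (d - i) (n / d) := by
  rw [← Finset.sum_filter, Finset.sum_sigma']
  refine Finset.sum_nbij' (fun q => ⟨q.1 + q.2.2.1, q.1⟩)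
    (fun p => (p.2, n / p.1, p.1 - p.2, n / p.1)) ?_ ?_ ?_ ?_ ?_
  · rintro ⟨a, x, b, y⟩ h
    rw [Finset.mem_filter, mem_Q] at h
    obtain ⟨⟨ha, hx, hb, hy, h⟩, heq⟩ := h
    dsimp only at *
    subst heq
    simp only [Finset.mem_sigma, Nat.mem_divisors, Finset.mem_Ico]
    have : (a + b) * x = n := by rw [← h]; ring
    refine ⟨⟨⟨x, this.symm⟩, ?_⟩, by omega, by omega⟩
    rw [← this]
    positivity
  · rintro ⟨d, i⟩ h
    simp only [Finset.mem_sigma, Nat.mem_divisors, Finset.mem_Ico] at h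
    obtain ⟨⟨hd, hn⟩, h1, h2⟩ := h
    rw [Finset.mem_filter, mem_Q]
    have hpos : 0 < n / d := Nat.div_pos (Nat.le_of_dvd (by omega) hd) (by omega)
    refine ⟨⟨h1, hpos, by dsimp only; omega, hpos, ?_⟩, rfl⟩
    dsimp only
    rw [← add_mul, Nat.add_sub_cancel' h2.le, Nat.mul_div_cancel' hd]
  · rintro ⟨a, x, b, y⟩ h
    rw [Finset.mem_filter, mem_Q] at h
    obtain ⟨⟨ha, hx, hb, hy, h⟩, heq⟩ := h
    dsimp only at *
    subst heq
    have : n / (a + b) = x := by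
      rw [← h, ← add_mul, Nat.mul_div_cancel_left _ (by omega)]
    simp [this]
  · rintro ⟨d, i⟩ h
    simp only [Finset.mem_sigma, Nat.mem_divisors, Finset.mem_Ico] at h
    obtain ⟨⟨hd, hn⟩, h1, h2⟩ := h
    simp
    omega
  · rintro ⟨a, x, b, y⟩ h
    rw [Finset.mem_filter, mem_Q] at h
    obtain ⟨⟨ha, hx, hb, hy, h⟩, heq⟩ := h
    dsimp only at *
    subst heq
    have : n / (a + b) = x := by
      rw [← h, ← add_mul, Nat.mul_div_cancel_left _ (by omega)]
    simp [this]

lemma Q_dual (n : ℕ) (g : ℕ × ℕ × ℕ × ℕ → ℂ) :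
    ∑ q ∈ Q n, g q = ∑ q ∈ Q n, g (q.2.1, q.1, q.2.2.2, q.2.2.1) := by
  refine Finset.sum_nbij' (fun q => (q.2.1, q.1, q.2.2.2, q.2.2.1))
    (fun q => (q.2.1, q.1, q.2.2.2, q.2.2.1)) ?_ ?_ ?_ ?_ ?_
  · rintro ⟨a, x, b, y⟩ h
    rw [mem_Q] at h ⊢
    exact ⟨h.2.1, h.1, h.2.2.2.1, h.2.2.1, by rw [mul_comm x, mul_comm y]; exact h.2.2.2.2⟩
  · rintro ⟨a, x, b, y⟩ h
    rw [mem_Q] at h ⊢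
    exact ⟨h.2.1, h.1, h.2.2.2.1, h.2.2.1, by rw [mul_comm x, mul_comm y]; exact h.2.2.2.2⟩
  · intros; rfl
  · intros; rfl
  · intros; rfl

lemma split3 (n : ℕ) (u v : ℕ × ℕ × ℕ × ℕ → ℕ) (g : ℕ × ℕ × ℕ × ℕ → ℂ) :
    ∑ q ∈ Q n, g q = ∑ q ∈ Q n, (if v q < u q then g q else 0) +
      ∑ q ∈ Q n, (if u q < v q then g q else 0) + ∑ q ∈ Q n, (if u q = v q then g q else 0) := by
  rw [← Finset.sum_add_distrib, ← Finset.sum_add_distrib]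
  refine Finset.sum_congr rfl fun q _ => ?_
  rcases lt_trichotomy (u q) (v q) with h | h | h
  · simp [h, h.not_gt, h.ne]
  · simp [h]
  · simp [h, h.not_gt, h.ne']

lemma liouville (n p : ℕ) (hp : Even p) (hp2 : p ≠ 0) :
    ∑ q ∈ Q n, (((q.1 : ℂ) - q.2.2.1) ^ p - ((q.1 : ℂ) + q.2.2.1) ^ p) =
      2 * ∑ q ∈ Q n, (if q.1 = q.2.2.1 then (q.1 : ℂ) ^ p else 0) -
      2 * ∑ q ∈ Q n, (if q.2.1 = q.2.2.2 then (q.1 : ℂ) ^ p else 0) -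
      ∑ q ∈ Q n, (if q.2.1 = q.2.2.2 then ((q.1 : ℂ) + q.2.2.1) ^ p else 0) := by
  rw [Finset.sum_sub_distrib]
  have a1 := split3 n (fun q => q.1) (fun q => q.2.2.1) (fun q => ((q.1 : ℂ) - q.2.2.1) ^ p)
  have a2 : ∑ q ∈ Q n, (if q.1 = q.2.2.1 then ((q.1 : ℂ) - q.2.2.1) ^ p else 0) = 0 := by
    refine Finset.sum_eq_zero fun q _ => ?_
    split_ifs with h
    · simp [h, hp2]
    · rfl
  have a3 : ∑ q ∈ Q n, (if q.1 < q.2.2.1 then ((q.1 : ℂ) - q.2.2.1) ^ p else 0) =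
      ∑ q ∈ Q n, (if q.2.2.1 < q.1 then ((q.1 : ℂ) - q.2.2.1) ^ p else 0) := by
    rw [Q_swap]
    refine Finset.sum_congr rfl fun q _ => ?_
    rw [← hp.neg_pow, neg_sub]
  have a4 : ∑ q ∈ Q n, (if q.2.2.1 < q.1 then ((q.1 : ℂ) - q.2.2.1) ^ p else 0) =
      ∑ q ∈ Q n, (if q.2.2.2 < q.2.1 then (q.2.2.1 : ℂ) ^ p else 0) := by
    rw [Q_conj n (fun _ b => (b : ℂ) ^ p)]
    refine Finset.sum_congr rfl fun q _ => ?_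
    split_ifs with h
    · rw [Nat.cast_sub h.le]
    · rfl
  have a5 : ∑ q ∈ Q n, (if q.2.2.2 < q.2.1 then (q.2.2.1 : ℂ) ^ p else 0) =
      ∑ q ∈ Q n, (if q.2.1 < q.2.2.2 then (q.1 : ℂ) ^ p else 0) := Q_swap _ _
  have b1 := split3 n (fun q => q.2.1) (fun q => q.2.2.2) (fun q => ((q.1 : ℂ) + q.2.2.1) ^ p)
  have b2 : ∑ q ∈ Q n, (if q.2.2.2 < q.2.1 then ((q.1 : ℂ) + q.2.2.1) ^ p else 0) =
      ∑ q ∈ Q n, (if q.2.2.1 < q.1 then (q.1 : ℂ) ^ p else 0) := by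
    rw [Q_conj n (fun a b => ((a : ℂ) + b) ^ p)]
    refine Finset.sum_congr rfl fun q _ => ?_
    split_ifs with h
    · rw [Nat.cast_sub h.le, add_sub_cancel]
    · rfl
  have b3 : ∑ q ∈ Q n, (if q.2.1 < q.2.2.2 then ((q.1 : ℂ) + q.2.2.1) ^ p else 0) =
      ∑ q ∈ Q n, (if q.2.2.2 < q.2.1 then ((q.1 : ℂ) + q.2.2.1) ^ p else 0) := by
    rw [Q_swap]
    refine Finset.sum_congr rfl fun q _ => ?_
    rw [add_comm]
  have c1 := split3 n (fun q => q.2.1) (fun q => q.2.2.2) (fun q => (q.1 : ℂ) ^ p)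
  have c2 := split3 n (fun q => q.1) (fun q => q.2.2.1) (fun q => (q.1 : ℂ) ^ p)
  have c3 : ∑ q ∈ Q n, (if q.2.2.2 < q.2.1 then (q.1 : ℂ) ^ p else 0) =
      ∑ q ∈ Q n, (if q.2.2.1 < q.1 then (q.2.2.1 : ℂ) ^ p else 0) :=
    Q_conj n (fun a _ => (a : ℂ) ^ p)
  have c4 : ∑ q ∈ Q n, (if q.2.2.1 < q.1 then (q.2.2.1 : ℂ) ^ p else 0) =
      ∑ q ∈ Q n, (if q.1 < q.2.2.1 then (q.1 : ℂ) ^ p else 0) := Q_swap _ _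
  rw [a1, a2, a3, a4, a5, b1, b3, b2]
  linear_combination 2 * c2 - 2 * c1 - 2 * c3 - 2 * c4

/-- The operator `q d/dq`. -/
noncomputable def D : ℂ⟦X⟧ →ₗ[ℂ] ℂ⟦X⟧ where
  toFun f := PowerSeries.mk fun n => (n : ℂ) * coeff n f
  map_add' f g := by ext n; simp [mul_add]
  map_smul' c f := by ext n; simp; ring

lemma coeff_D (f : ℂ⟦X⟧) (n : ℕ) : coeff n (D f) = (n : ℂ) * coeff n f := by simp [D]

lemma D_mul (f g : ℂ⟦X⟧) : D (f * g) = D f * g + f * D g := by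
  ext n
  simp only [coeff_D, coeff_mul, map_add, Finset.mul_sum, ← Finset.sum_add_distrib]
  refine Finset.sum_congr rfl fun p hp => ?_
  have : (n : ℂ) = p.1 + p.2 := by
    exact_mod_cast (Finset.HasAntidiagonal.mem_antidiagonal.1 hp).symm
  rw [this]
  ring

lemma D_one : D 1 = 0 := by
  ext n
  rw [coeff_D, coeff_one]
  split_ifs with h <;> simp [h]

lemma coeff_V_mul (i j n : ℕ) :
    coeff n (V i * V j) = ∑ q ∈ Q n, (q.1 : ℂ) ^ i * (q.2.2.1 : ℂ) ^ j := by
  rw [coeff_mul]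
  simp only [coeff_V, Finset.sum_mul_sum]
  simp only [← Finset.sum_product']
  rw [Finset.sum_sigma']
  refine Finset.sum_nbij' (fun p => (p.2.1, p.1.1 / p.2.1, p.2.2, p.1.2 / p.2.2))
    (fun q => ⟨(q.1 * q.2.1, q.2.2.1 * q.2.2.2), (q.1, q.2.2.1)⟩) ?_ ?_ ?_ ?_ ?_
  · rintro ⟨⟨u, v⟩, ⟨d, e⟩⟩ h
    simp only [Finset.mem_sigma, Finset.HasAntidiagonal.mem_antidiagonal, Finset.mem_product,
      Nat.mem_divisors] at h
    obtain ⟨h, ⟨hd, hu⟩, he, hv⟩ := h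
    rw [mem_Q]
    have hu0 : 0 < u := Nat.pos_of_ne_zero hu
    have hv0 : 0 < v := Nat.pos_of_ne_zero hv
    have hd0 : 0 < d := Nat.pos_of_dvd_of_pos hd hu0
    have he0 : 0 < e := Nat.pos_of_dvd_of_pos he hv0
    refine ⟨hd0, Nat.div_pos (Nat.le_of_dvd hu0 hd) hd0, he0,
      Nat.div_pos (Nat.le_of_dvd hv0 he) he0, ?_⟩
    dsimp only
    rw [Nat.mul_div_cancel' hd, Nat.mul_div_cancel' he, h]
  · rintro ⟨a, x, b, y⟩ h
    rw [mem_Q] at h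
    obtain ⟨ha, hx, hb, hy, h⟩ := h
    simp only [Finset.mem_sigma, Finset.HasAntidiagonal.mem_antidiagonal, Finset.mem_product,
      Nat.mem_divisors]
    exact ⟨h, ⟨dvd_mul_right _ _, by positivity⟩, dvd_mul_right _ _, by positivity⟩
  · rintro ⟨⟨u, v⟩, ⟨d, e⟩⟩ h
    simp only [Finset.mem_sigma, Finset.HasAntidiagonal.mem_antidiagonal, Finset.mem_product,
      Nat.mem_divisors] at h
    obtain ⟨h, ⟨hd, hu⟩, he, hv⟩ := h
    simp only [Nat.mul_div_cancel' hd, Nat.mul_div_cancel' he]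
  · rintro ⟨a, x, b, y⟩ h
    rw [mem_Q] at h
    obtain ⟨ha, hx, hb, hy, h⟩ := h
    simp only [Nat.mul_div_cancel_left _ ha, Nat.mul_div_cancel_left _ hb]
  · rintro ⟨⟨u, v⟩, ⟨d, e⟩⟩ h
    rfl

lemma D_V (k : ℕ) (hk : Odd k) :
    (2 : ℂ) • D (V k) = ∑ j ∈ Finset.range (k + 1 + 1),
        (((k + 1).choose j : ℂ) * ((-1) ^ (k + 1 - j) - 1)) • (V j * V (k + 1 - j)) +
      V (k + 2) + divT (fun m : ℕ => (m : ℂ) ^ (k + 1) +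
        2 * ∑ i ∈ Finset.range m, (i : ℂ) ^ (k + 1)) := by
  ext n
  have hl := liouville n (k + 1) hk.add_one (by omega)
  have e1 : ∑ q ∈ Q n, (((q.1 : ℂ) - q.2.2.1) ^ (k + 1) - ((q.1 : ℂ) + q.2.2.1) ^ (k + 1)) =
      ∑ j ∈ Finset.range (k + 1 + 1), (((k + 1).choose j : ℂ) * ((-1) ^ (k + 1 - j) - 1)) *
        ∑ q ∈ Q n, (q.1 : ℂ) ^ j * (q.2.2.1 : ℂ) ^ (k + 1 - j) := by
    simp only [Finset.mul_sum]
    rw [Finset.sum_comm]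
    refine Finset.sum_congr rfl fun q _ => ?_
    rw [sub_eq_add_neg (q.1 : ℂ), add_pow, add_pow, ← Finset.sum_sub_distrib]
    refine Finset.sum_congr rfl fun j _ => ?_
    rw [neg_pow (q.2.2.1 : ℂ)]
    ring
  have e2 : ∑ q ∈ Q n, (if q.1 = q.2.2.1 then (q.1 : ℂ) ^ (k + 1) else 0) =
      ∑ d ∈ n.divisors, ((n : ℂ) * (d : ℂ) ^ k - (d : ℂ) ^ (k + 1)) := by
    rw [Q_dual]
    have := Q_diag n (fun _ _ x => (x : ℂ) ^ (k + 1))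
    rw [this, ← Nat.sum_div_divisors n (fun d => (n : ℂ) * (d : ℂ) ^ k - (d : ℂ) ^ (k + 1))]
    refine Finset.sum_congr rfl fun d hd => ?_
    obtain ⟨hd, hn⟩ := Nat.mem_divisors.1 hd
    have hd0 : 0 < d := Nat.pos_of_dvd_of_pos hd (by omega)
    simp only [Finset.sum_const, Nat.card_Ico, nsmul_eq_mul]
    rw [Nat.cast_sub hd0]
    have : (n : ℂ) = d * (n / d : ℕ) := by
      exact_mod_cast (Nat.mul_div_cancel' hd).symm
    generalize n / d = m at *
    rw [this]
    push_cast
    ring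
  have e3 : ∑ q ∈ Q n, (if q.2.1 = q.2.2.2 then (q.1 : ℂ) ^ (k + 1) else 0) =
      ∑ d ∈ n.divisors, ∑ i ∈ Finset.range d, (i : ℂ) ^ (k + 1) := by
    rw [Q_diag n (fun a _ _ => (a : ℂ) ^ (k + 1))]
    refine Finset.sum_congr rfl fun d hd => ?_
    have hd0 : 0 < d := Nat.pos_of_mem_divisors hd
    rw [Finset.range_eq_Ico, Finset.sum_eq_sum_Ico_succ_bot hd0]
    simp
  have e4 : ∑ q ∈ Q n, (if q.2.1 = q.2.2.2 then ((q.1 : ℂ) + q.2.2.1) ^ (k + 1) else 0) =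
      ∑ d ∈ n.divisors, ((d : ℂ) ^ (k + 2) - (d : ℂ) ^ (k + 1)) := by
    rw [Q_diag n (fun a b _ => ((a : ℂ) + b) ^ (k + 1))]
    refine Finset.sum_congr rfl fun d hd => ?_
    have hd0 : 0 < d := Nat.pos_of_mem_divisors hd
    have : ∀ i ∈ Finset.Ico 1 d, ((i : ℂ) + ((d - i : ℕ) : ℂ)) ^ (k + 1) = (d : ℂ) ^ (k + 1) := by
      intro i hi
      rw [Nat.cast_sub (Finset.mem_Ico.1 hi).2.le, add_sub_cancel]
    rw [Finset.sum_congr rfl this]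
    simp only [Finset.sum_const, Nat.card_Ico, nsmul_eq_mul]
    rw [Nat.cast_sub hd0]
    push_cast
    ring
  rw [e1, e2, e3, e4] at hl
  simp only [map_add, map_sum, coeff_smul, coeff_V_mul, coeff_V, coeff_D, smul_eq_mul]
  rw [hl]
  simp only [divT, LinearMap.coe_mk, AddHom.coe_mk, coeff_mk, Finset.sum_sub_distrib,
    Finset.sum_add_distrib, ← Finset.mul_sum]
  ring

/-- Filtered span of products of the `V a` with odd `a`. -/
noncomputable def G (w : ℕ) : Submodule ℂ ℂ⟦X⟧ :=
  Submodule.span ℂ ((fun l : List ℕ => (l.map V).prod) ''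
    {l | (∀ a ∈ l, Odd a) ∧ (l.map (· + 1)).sum ≤ w})

lemma G_mono {w w' : ℕ} (h : w ≤ w') : G w ≤ G w' :=
  Submodule.span_mono (Set.image_mono fun _ hv => ⟨hv.1, le_trans hv.2 h⟩)

lemma prod_mem_G {l : List ℕ} {w : ℕ} (h : ∀ a ∈ l, Odd a) (h' : (l.map (· + 1)).sum ≤ w) :
    (l.map V).prod ∈ G w := Submodule.subset_span ⟨l, ⟨h, h'⟩, rfl⟩

lemma V_mem_G {a w : ℕ} (h : Odd a) (h' : a + 1 ≤ w) : V a ∈ G w := by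
  have := prod_mem_G (l := [a]) (w := w) (by simpa using h) (by simpa using h')
  simpa using this

lemma mul_mem_G {w w' : ℕ} {f g} (hf : f ∈ G w) (hg : g ∈ G w') : f * g ∈ G (w + w') := by
  have h : G w * G w' ≤ G (w + w') := by
    rw [G, G, Submodule.span_mul_span, Submodule.span_le]
    rintro _ ⟨_, ⟨l, hl, rfl⟩, _, ⟨l', hl', rfl⟩, rfl⟩
    have := prod_mem_G (l := l ++ l') (w := w + w')
      (by
        intro a ha
        rcases List.mem_append.1 ha with h | h
        · exact hl.1 a h
        · exact hl'.1 a h)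
      (by
        rw [List.map_append, List.sum_append]
        exact add_le_add hl.2 hl'.2)
    simpa using this
  exact h (Submodule.mul_mem_mul hf hg)

lemma divT_mem_G {f : ℕ → ℂ} {d : ℕ} (hf : f ∈ polySpan {j | Odd j ∧ j ≤ d}) :
    divT f ∈ G (d + 1) := by
  have : polySpan {j | Odd j ∧ j ≤ d} ≤ (G (d + 1)).comap divT := by
    rw [polySpan, Submodule.span_le]
    rintro _ ⟨j, hj, rfl⟩
    exact V_mem_G hj.1 (Nat.succ_le_succ hj.2)
  exact this hf

lemma D_V_mem (k : ℕ) (hk : Odd k) : D (V k) ∈ G (k + 1 + 2) := by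
  have h2 : (2 : ℂ) • D (V k) ∈ G (k + 1 + 2) := by
    rw [D_V k hk]
    refine Submodule.add_mem _ (Submodule.add_mem _ (Submodule.sum_mem _ fun j hj => ?_) ?_) ?_
    · have hj' := Finset.mem_range.1 hj
      rcases Nat.even_or_odd (k + 1 - j) with he | ho
      · simp [he.neg_one_pow]
      · refine Submodule.smul_mem _ _ ?_
        have hjo : Odd j := by
          rcases ho with ⟨a, ha⟩
          rcases hk with ⟨b, hb⟩
          exact ⟨b - a, by omega⟩
        refine G_mono ?_ (mul_mem_G (V_mem_G hjo le_rfl) (V_mem_G ho le_rfl))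
        omega
    · exact V_mem_G (hk.add_even (by decide)) (by omega)
    · exact divT_mem_G (sum_pow_odd_mem (k + 1) hk.add_one (by have := hk.pos; omega))
  have := Submodule.smul_mem _ (2⁻¹ : ℂ) h2
  rwa [smul_smul, inv_mul_cancel₀ two_ne_zero, one_smul] at this

lemma D_mem {w : ℕ} {f} (hf : f ∈ G w) : D f ∈ G (w + 2) := by
  have : G w ≤ (G (w + 2)).comap D := by
    rw [G, Submodule.span_le]
    rintro _ ⟨l, ⟨hl, hw⟩, rfl⟩
    simp only [Submodule.comap_coe, Set.mem_preimage]
    clear hf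
    change D ((l.map V).prod) ∈ G (w + 2)
    refine G_mono (Nat.add_le_add_right hw 2) ?_
    clear hw
    induction l with
    | nil => simp [D_one]
    | cons a l ih =>
      have hl' : ∀ b ∈ l, Odd b := fun b hb => hl b (List.mem_cons_of_mem _ hb)
      have ha : Odd a := hl a List.mem_cons_self
      simp only [List.map_cons, List.prod_cons, List.sum_cons]
      rw [D_mul]
      refine Submodule.add_mem _ ?_ ?_
      · refine G_mono ?_ (mul_mem_G (D_V_mem a ha) (prod_mem_G hl' le_rfl))
        omega
      · refine G_mono ?_ (mul_mem_G (V_mem_G ha le_rfl) (ih hl'))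
        omega
  exact this hf

lemma G_le_F (w : ℕ) : G w ≤ F w := by
  rw [G, Submodule.span_le]
  rintro _ ⟨l, ⟨hl, hw⟩, rfl⟩
  refine F_mono hw ?_
  clear hw
  induction l with
  | nil => simpa using one_mem_F
  | cons a l ih =>
    have ha : Odd a := hl a List.mem_cons_self
    have := U_mul_mem (a.toPNat ha.pos) (ih fun b hb => hl b (List.mem_cons_of_mem _ hb))
    rw [U_single] at this
    have hc : ((a.toPNat ha.pos : ℕ+) : ℕ) = a := rfl
    rw [hc] at this
    simpa using this

lemma iter_mem (k l : ℕ) (hk : Odd k) : (D^[l]) (V k) ∈ G (k + 1 + 2 * l) := by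
  induction l with
  | zero => exact V_mem_G hk le_rfl
  | succ l ih =>
    rw [Function.iterate_succ_apply']
    exact D_mem ih

lemma coeff_iter (k l n : ℕ) :
    coeff n ((D^[l]) (V k)) = (n : ℂ) ^ l * ∑ d ∈ n.divisors, (d : ℂ) ^ k := by
  induction l with
  | zero => simp [coeff_V]
  | succ l ih =>
    rw [Function.iterate_succ_apply', coeff_D, ih]
    ring

lemma weight_le (v : List ℕ+) : v = [] ∨ weight v + 1 ≤ W v := by
  cases v with
  | nil => exact Or.inl rfl
  | cons a v =>
    right
    have : ∀ v : List ℕ+, weight v ≤ W v := by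
      intro v
      exact List.sum_le_sum fun i _ => by simp
    have h := this v
    have : weight (a :: v) = (a : ℕ) + weight v := by simp [weight]
    rw [W_cons]
    omega

lemma exists_comb {w m : ℕ} (hw : w ≤ m + 1) {f} (hf : f ∈ F w) :
    ∃ c : List ℕ+ →₀ ℂ, (∀ v ∈ c.support, weight v ≤ m) ∧
      ∀ n, coeff n f = c.sum fun v x => x * (macM v n : ℂ) := by
  rw [F, Finsupp.mem_span_image_iff_linearCombination] at hf
  obtain ⟨c, hc, rfl⟩ := hf
  refine ⟨c, fun v hv => ?_, fun n => ?_⟩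
  · have h1 : W v ≤ w := (Finsupp.mem_supported _ _).1 hc hv
    rcases weight_le v with rfl | h
    · simp [weight]
    · omega
  · rw [Finsupp.linearCombination_apply, Finsupp.sum, map_sum, Finsupp.sum]
    refine Finset.sum_congr rfl fun v _ => ?_
    simp [U]

lemma orth (t r n : ℕ) (ht : 2 ≤ t) :
    ∑ s ∈ Finset.range t, ((1 : ℂ) / t * (Complex.exp (2 * Real.pi * I / (t : ℂ)))⁻¹ ^ (s * r)) *
      Complex.exp (2 * Real.pi * I / (t : ℂ)) ^ (s * n) = if n % t = r % t then 1 else 0 := by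
  have ht0 : t ≠ 0 := by omega
  have htc : (t : ℂ) ≠ 0 := by exact_mod_cast ht0
  have hz := Complex.isPrimitiveRoot_exp t ht0
  set z := Complex.exp (2 * Real.pi * I / (t : ℂ)) with hzdef
  have hz0 : z ≠ 0 := Complex.exp_ne_zero _
  have h : ∀ s, ((1 : ℂ) / t * z⁻¹ ^ (s * r)) * z ^ (s * n) = 1 / t * (z ^ n / z ^ r) ^ s := by
    intro s
    rw [div_pow, ← pow_mul, ← pow_mul, inv_pow, mul_comm s r, mul_comm s n]
    field_simp
  simp only [h]
  rw [← Finset.mul_sum]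
  have hiff : z ^ n = z ^ r ↔ n % t = r % t := by
    rw [← pow_mod_orderOf z n, ← pow_mod_orderOf z r, ← hz.eq_orderOf]
    exact ⟨fun h => hz.pow_inj (Nat.mod_lt _ (by omega)) (Nat.mod_lt _ (by omega)) h,
      fun h => by rw [h]⟩
  split_ifs with hn
  · rw [hiff.2 hn, div_self (pow_ne_zero _ hz0)]
    simp [htc]
  · have hne : z ^ n / z ^ r ≠ 1 := by
      rw [Ne, div_eq_one_iff_eq (pow_ne_zero _ hz0), hiff]
      exact hn
    have hp : (z ^ n / z ^ r) ^ t = 1 := by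
      rw [div_pow, ← pow_mul, ← pow_mul, mul_comm n, mul_comm r, pow_mul, pow_mul, hz.pow_eq_one]
      simp
    rw [geom_sum_eq hne, hp]
    simp

end MacProof

/-- `b_{k,ℓ}^{r,t}(n)` is a finite `ℂ`-linear combination of the coefficients
`ζ_t^{sn}·M_{𝐚}(n)` of the twisted MacMahonesque series, over `|𝐚| ≤ k + 2ℓ` and
`0 ≤ s ≤ t - 1`. -/
theorem bFun_eq_macMahonesque_combination (t r k l : ℕ) (ht : 2 ≤ t) (hr : 0 < r)
    (hrt : r < t) (hgcd : Nat.gcd r t = 1) (hk : Odd k) (hl : Odd l) (hkpos : 0 < k)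
    (hkl : k < l) :
    ∃ (S : Finset (List ℕ+)) (c : List ℕ+ → ℕ → ℂ),
      (∀ v ∈ S, weight v ≤ k + 2 * l) ∧
      ∀ n : ℕ+, (bFun k l r t (n : ℕ) : ℂ) =
        ∑ v ∈ S, ∑ s ∈ Finset.range t,
          c v s * Complex.exp (2 * Real.pi * I / (t : ℂ)) ^ (s * (n : ℕ)) *
            (macM v (n : ℕ) : ℂ) := by
  have key : ∀ k l : ℕ, Odd k → Odd l → ∃ c : List ℕ+ →₀ ℂ,
      (∀ v ∈ c.support, weight v ≤ k + 2 * l) ∧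
      ∀ n : ℕ, ((n : ℂ) ^ l + 1) * ∑ d ∈ n.divisors, (d : ℂ) ^ k =
        c.sum fun v x => x * (macM v n : ℂ) := by
    intro k l hk hl
    have hf : (MacProof.D^[l]) (MacProof.V k) + MacProof.V k ∈ MacProof.F (k + 1 + 2 * l) :=
      MacProof.G_le_F _ (Submodule.add_mem _ (MacProof.iter_mem k l hk)
        (MacProof.V_mem_G hk (by omega)))
    obtain ⟨c, hc, h⟩ := MacProof.exists_comb (m := k + 2 * l) (by omega) hf
    refine ⟨c, hc, fun n => ?_⟩
    rw [← h n, map_add, MacProof.coeff_iter, MacProof.coeff_V]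
    ring
  classical
  obtain ⟨c₁, hc₁, h₁⟩ := key k l hk hl
  obtain ⟨c₂, hc₂, h₂⟩ := key l k hl hk
  refine ⟨c₁.support ∪ c₂.support, fun v s => (if s = 0 then c₁ v else 0) -
    ((1 : ℂ) / t * (Complex.exp (2 * Real.pi * I / (t : ℂ)))⁻¹ ^ (s * r)) * c₂ v, ?_, ?_⟩
  · intro v hv
    rcases Finset.mem_union.1 hv with h | h
    · exact hc₁ v h
    · have := hc₂ v h
      omega
  · intro n
    have inner : ∀ v : List ℕ+, ∑ s ∈ Finset.range t, ((if s = 0 then c₁ v else 0) -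
        ((1 : ℂ) / t * (Complex.exp (2 * Real.pi * I / (t : ℂ)))⁻¹ ^ (s * r)) * c₂ v) *
        Complex.exp (2 * Real.pi * I / (t : ℂ)) ^ (s * (n : ℕ)) * (macM v (n : ℕ) : ℂ) =
        c₁ v * (macM v (n : ℕ) : ℂ) -
          (if (n : ℕ) % t = r % t then 1 else 0) * (c₂ v * (macM v (n : ℕ) : ℂ)) := by
      intro v
      rw [← MacProof.orth t r n ht, Finset.sum_mul]
      have e0 : c₁ v * (macM v (n : ℕ) : ℂ) = ∑ s ∈ Finset.range t, (if s = 0 then c₁ v else 0) *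
          Complex.exp (2 * Real.pi * I / (t : ℂ)) ^ (s * (n : ℕ)) * (macM v (n : ℕ) : ℂ) := by
        rw [Finset.sum_eq_single 0]
        · simp
        · intro b _ hb
          simp [hb]
        · intro h
          simp at h
          omega
      rw [e0, ← Finset.sum_sub_distrib]
      refine Finset.sum_congr rfl fun s _ => ?_
      ring
    rw [Finset.sum_congr rfl fun v _ => inner v, Finset.sum_sub_distrib, ← Finset.mul_sum,
      ← Finsupp.sum_of_support_subset c₁ Finset.subset_union_left
        (fun v x => x * (macM v (n : ℕ) : ℂ)) (by simp),
      ← Finsupp.sum_of_support_subset c₂ Finset.subset_union_right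
        (fun v x => x * (macM v (n : ℕ) : ℂ)) (by simp), ← h₁ n, ← h₂ n]
    unfold bFun
    split_ifs with h
    · push_cast
      rw [Finset.sum_sub_distrib, ← Finset.mul_sum, ← Finset.mul_sum]
      ring
    · push_cast
      rw [← Finset.mul_sum]
      ring
end

section
/- Let t ≥ 2 and 0 < r < t be integers with gcd(r, t) = 1, and let ζ_t := e^{2πi/t}. Then there exists an infinite family (f_i)_{i ∈ ℕ} of functions from the positive integers to ℂ that is linearly independent over ℂ such that: each f_i has the form f_i(n) = Σ_{|𝐚| ≤ d_i} Σ_{s=0}^{t−1} c_{𝐚}(s)·ζ_t^{sn}·M_{𝐚}(n), a finite linear combination with complex coefficients c_{𝐚}(s) over vectors 𝐚 of positive integers with |𝐚| ≤ d_i for some d_i ≥ 7; each f_i(n) is a nonnegative real number for every positive integer n; and for every i and every integer n ≥ 2, f_i(n) = 0 if and only if n is prime and n ≡ r (mod t). -/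
open Complex

/-- Quadruples `((a,u),(b,v))` of positive integers with `a u + b v = n`. -/
def quads (n : ℕ) : Finset ((ℕ × ℕ) × (ℕ × ℕ)) :=
  ((Finset.Icc 1 n ×ˢ Finset.Icc 1 n) ×ˢ (Finset.Icc 1 n ×ˢ Finset.Icc 1 n)).filter
    fun x => x.1.1 * x.1.2 + x.2.1 * x.2.2 = n

lemma mem_quads {n : ℕ} {x : (ℕ × ℕ) × (ℕ × ℕ)} : x ∈ quads n ↔
    (0 < x.1.1 ∧ 0 < x.1.2 ∧ 0 < x.2.1 ∧ 0 < x.2.2) ∧ x.1.1 * x.1.2 + x.2.1 * x.2.2 = n := by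
  obtain ⟨⟨a, u⟩, b, v⟩ := x
  simp only [quads, Finset.mem_filter, Finset.mem_product, Finset.mem_Icc]
  constructor
  · rintro ⟨⟨⟨h1, h2⟩, h3, h4⟩, h⟩
    exact ⟨⟨by omega, by omega, by omega, by omega⟩, h⟩
  · rintro ⟨⟨h1, h2, h3, h4⟩, h⟩
    have e1 : a ≤ a * u := Nat.le_mul_of_pos_right a h2
    have e2 : u ≤ a * u := Nat.le_mul_of_pos_left u h1
    have e3 : b ≤ b * v := Nat.le_mul_of_pos_right b h4
    have e4 : v ≤ b * v := Nat.le_mul_of_pos_left v h3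
    refine ⟨⟨⟨⟨?_, ?_⟩, ?_, ?_⟩, ⟨?_, ?_⟩, ?_, ?_⟩, h⟩ <;> omega

/-- Trichotomy splitting of a sum. -/
lemma sum_tri {ι : Type*} (s : Finset ι) (p q : ι → ℕ) (F : ι → ℤ) :
    ∑ x ∈ s, F x = ∑ x ∈ s with p x < q x, F x + ∑ x ∈ s with q x < p x, F x
      + ∑ x ∈ s with p x = q x, F x := by
  simp only [Finset.sum_filter, ← Finset.sum_add_distrib]
  refine Finset.sum_congr rfl fun x _ => ?_
  rcases lt_trichotomy (p x) (q x) with h | h | h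
  · simp [h, h.ne, h.not_gt]
  · simp [h]
  · simp [h, h.ne', h.not_gt]

lemma split_uv (n : ℕ) (Q : ℕ → ℕ → ℤ) :
    ∑ x ∈ quads n, Q x.1.1 x.2.1 =
      ∑ x ∈ quads n with x.1.2 < x.2.2, (Q x.1.1 x.2.1 + Q x.2.1 x.1.1)
      + ∑ x ∈ quads n with x.1.2 = x.2.2, Q x.1.1 x.2.1 := by
  rw [sum_tri _ (fun x => x.1.2) (fun x => x.2.2), Finset.sum_add_distrib]
  congr 2
  refine Finset.sum_nbij' Prod.swap Prod.swap ?_ ?_ ?_ ?_ ?_ <;>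
    simp +contextual [mem_quads, add_comm]

lemma split_ab (n : ℕ) (Q : ℕ → ℕ → ℤ) :
    ∑ x ∈ quads n, Q x.1.1 x.2.1 =
      ∑ x ∈ quads n with x.1.2 < x.2.2,
        (Q (x.1.1 + x.2.1) x.2.1 + Q x.2.1 (x.1.1 + x.2.1))
      + ∑ x ∈ quads n with x.1.1 = x.2.1, Q x.1.1 x.2.1 := by
  rw [sum_tri _ (fun x => x.2.1) (fun x => x.1.1)]
  have h1 : ∑ x ∈ quads n with x.1.1 < x.2.1, Q x.1.1 x.2.1 =
      ∑ x ∈ quads n with x.2.1 < x.1.1, Q x.2.1 x.1.1 := by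
    refine Finset.sum_nbij' Prod.swap Prod.swap ?_ ?_ ?_ ?_ ?_ <;>
      simp +contextual [mem_quads, add_comm]
  rw [h1, ← Finset.sum_add_distrib]
  congr 1
  · refine Finset.sum_nbij' (fun x => ((x.1.1 - x.2.1, x.1.2), (x.2.1, x.1.2 + x.2.2)))
      (fun x => ((x.1.1 + x.2.1, x.1.2), (x.2.1, x.2.2 - x.1.2))) ?_ ?_ ?_ ?_ ?_
    · rintro ⟨⟨a, u⟩, b, v⟩ h
      simp only [Finset.mem_filter, mem_quads] at h ⊢
      obtain ⟨⟨⟨h1, h2, h3, h4⟩, h5⟩, h6⟩ := h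
      obtain ⟨c, rfl⟩ := Nat.exists_eq_add_of_lt h6
      refine ⟨⟨⟨by omega, h2, h3, by omega⟩, ?_⟩, by omega⟩
      rw [show b + c + 1 - b = c + 1 by omega]
      linarith
    · rintro ⟨⟨a, u⟩, b, v⟩ h
      simp only [Finset.mem_filter, mem_quads] at h ⊢
      obtain ⟨⟨⟨h1, h2, h3, h4⟩, h5⟩, h6⟩ := h
      obtain ⟨c, rfl⟩ := Nat.exists_eq_add_of_lt h6
      refine ⟨⟨⟨by omega, h2, h3, by omega⟩, ?_⟩, by omega⟩
      rw [show u + c + 1 - u = c + 1 by omega]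
      linarith
    · rintro ⟨⟨a, u⟩, b, v⟩ h
      simp only [Finset.mem_filter, mem_quads] at h ⊢
      ext <;> grind
    · rintro ⟨⟨a, u⟩, b, v⟩ h
      simp only [Finset.mem_filter, mem_quads] at h ⊢
      ext <;> grind
    · rintro ⟨⟨a, u⟩, b, v⟩ h
      simp only [Finset.mem_filter, mem_quads] at h ⊢
      rw [Nat.sub_add_cancel h.2.le]
  · refine Finset.sum_congr ?_ fun _ _ => rfl
    ext x; simp [eq_comm]

lemma diag_ab (n : ℕ) (Q : ℕ → ℕ → ℤ) :
    ∑ x ∈ quads n with x.1.1 = x.2.1, Q x.1.1 x.2.1 =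
      ∑ d ∈ n.divisors, Q d d * ((n / d : ℕ) - 1 : ℤ) := by
  have : ∀ d ∈ n.divisors, Q d d * ((n / d : ℕ) - 1 : ℤ) =
      ∑ u ∈ Finset.Ico 1 (n / d), Q d d := by
    intro d hd
    have := Nat.pos_of_mem_divisors hd
    have h2 : 0 < n / d := Nat.div_pos (Nat.divisor_le hd) this
    rw [Finset.sum_const, Nat.card_Ico, nsmul_eq_mul, Nat.cast_sub h2]
    push_cast; ring
  rw [Finset.sum_congr rfl this, Finset.sum_sigma']
  refine Finset.sum_nbij' (fun x => ⟨x.1.1, x.1.2⟩)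
    (fun y => ((y.1, y.2), (y.1, n / y.1 - y.2))) ?_ ?_ ?_ ?_ ?_
  · rintro ⟨⟨a, u⟩, b, v⟩ h
    simp only [Finset.mem_filter, mem_quads, Finset.mem_sigma, Finset.mem_Ico,
      Nat.mem_divisors] at h ⊢
    obtain ⟨⟨⟨h1, h2, h3, h4⟩, h5⟩, rfl⟩ := h
    have : n = a * (u + v) := by rw [← h5]; ring
    subst this
    rw [Nat.mul_div_cancel_left _ h1]
    exact ⟨⟨dvd_mul_right _ _, by positivity⟩, by omega, by omega⟩
  · rintro ⟨d, u⟩ h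
    simp only [Finset.mem_filter, mem_quads, Finset.mem_sigma, Finset.mem_Ico,
      Nat.mem_divisors] at h ⊢
    obtain ⟨⟨⟨e, rfl⟩, h0⟩, h1, h2⟩ := h
    have hd : 0 < d := Nat.pos_of_ne_zero (by rintro rfl; simp at h0)
    rw [Nat.mul_div_cancel_left _ hd] at h2 ⊢
    refine ⟨⟨⟨hd, by omega, hd, by omega⟩, ?_⟩, trivial⟩
    rw [← mul_add]; congr 1; omega
  · rintro ⟨⟨a, u⟩, b, v⟩ h
    simp only [Finset.mem_filter, mem_quads] at h ⊢
    obtain ⟨⟨⟨h1, h2, h3, h4⟩, h5⟩, rfl⟩ := h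
    have : n = a * (u + v) := by rw [← h5]; ring
    subst this
    rw [Nat.mul_div_cancel_left _ h1]
    simp
  · rintro ⟨d, u⟩ h
    rfl
  · rintro ⟨⟨a, u⟩, b, v⟩ h
    simp only [Finset.mem_filter, mem_quads] at h ⊢
    rw [h.2]

lemma diag_uv (n : ℕ) (Q : ℕ → ℕ → ℤ) :
    ∑ x ∈ quads n with x.1.2 = x.2.2, Q x.1.1 x.2.1 =
      ∑ m ∈ n.divisors, ∑ j ∈ Finset.Ico 1 m, Q j (m - j) := by
  rw [Finset.sum_sigma']
  refine Finset.sum_nbij' (fun x => ⟨x.1.1 + x.2.1, x.1.1⟩)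
    (fun y => ((y.2, n / y.1), (y.1 - y.2, n / y.1))) ?_ ?_ ?_ ?_ ?_
  · rintro ⟨⟨a, u⟩, b, v⟩ h
    simp only [Finset.mem_filter, mem_quads, Finset.mem_sigma, Finset.mem_Ico,
      Nat.mem_divisors] at h ⊢
    obtain ⟨⟨⟨h1, h2, h3, h4⟩, h5⟩, rfl⟩ := h
    have : n = (a + b) * u := by rw [← h5]; ring
    subst this
    exact ⟨⟨dvd_mul_right _ _, by positivity⟩, by omega, by omega⟩
  · rintro ⟨d, u⟩ h
    simp only [Finset.mem_filter, mem_quads, Finset.mem_sigma, Finset.mem_Ico,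
      Nat.mem_divisors] at h ⊢
    obtain ⟨⟨⟨e, rfl⟩, h0⟩, h1, h2⟩ := h
    have hd : 0 < d := by omega
    have he : 0 < e := Nat.pos_of_ne_zero (by rintro rfl; simp at h0)
    rw [Nat.mul_div_cancel_left _ hd]
    refine ⟨⟨⟨by omega, he, by omega, he⟩, ?_⟩, trivial⟩
    rw [← add_mul]; congr 1; omega
  · rintro ⟨⟨a, u⟩, b, v⟩ h
    simp only [Finset.mem_filter, mem_quads] at h ⊢
    obtain ⟨⟨⟨h1, h2, h3, h4⟩, h5⟩, rfl⟩ := h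
    have : n = (a + b) * u := by rw [← h5]; ring
    subst this
    rw [Nat.mul_div_cancel_left _ (by omega)]
    simp
  · rintro ⟨d, u⟩ h
    simp only [Finset.mem_sigma, Finset.mem_Ico] at h
    simp only [Sigma.mk.injEq, heq_eq_eq, and_true]
    omega
  · rintro ⟨⟨a, u⟩, b, v⟩ h
    simp

lemma macM_one (k : ℕ+) (n : ℕ) (hn : 0 < n) :
    macM [k] n = ∑ d ∈ n.divisors, d ^ (k : ℕ) := by
  unfold macM
  rw [← Finset.sum_filter]
  change ∑ sm ∈ (Fintype.piFinset fun _ : Fin 1 => Finset.Icc 1 n ×ˢ Finset.Icc 1 n) with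
    ((∀ i j : Fin 1, i < j → (sm i).1 < (sm j).1) ∧ n = ∑ i : Fin 1, (sm i).2 * (sm i).1),
     ∏ i : Fin 1, (sm i).2 ^ ([k].get i : ℕ) = _
  refine Finset.sum_nbij' (fun sm => (sm 0).2) (fun d _ => (n / d, d)) ?_ ?_ ?_ ?_ ?_
  · intro sm h
    simp only [Finset.mem_filter, Fintype.mem_piFinset, Finset.mem_product, Finset.mem_Icc,
      Fin.sum_univ_one] at h
    rw [Nat.mem_divisors]
    exact ⟨⟨_, h.2.2⟩, hn.ne'⟩
  · intro d h
    have hd := Nat.pos_of_mem_divisors h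
    have hle := Nat.divisor_le h
    have h2 : 0 < n / d := Nat.div_pos hle hd
    have h3 := Nat.div_le_self n d
    have h4 := Nat.mul_div_cancel' (Nat.dvd_of_mem_divisors h)
    simp only [Finset.mem_filter, Fintype.mem_piFinset, Finset.mem_product, Finset.mem_Icc,
      Fin.sum_univ_one]
    refine ⟨fun _ => ⟨⟨h2, h3⟩, hd, hle⟩, fun i j hij => ?_, h4.symm⟩
    exact absurd hij (by omega)
  · intro sm h
    simp only [Finset.mem_filter, Fintype.mem_piFinset, Finset.mem_product, Finset.mem_Icc,
      Fin.sum_univ_one] at h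
    funext i
    have hi : i = 0 := by omega
    subst hi
    have h0 := h.1 0
    have h1 : n / (sm 0).2 = (sm 0).1 :=
      Nat.div_eq_of_eq_mul_right (by omega) h.2.2
    ext
    · exact h1
    · rfl
  · intro d h
    rfl
  · intro sm h
    simp

lemma macM_two (k l : ℕ+) (n : ℕ) : macM [k, l] n =
    ∑ x ∈ quads n with x.1.2 < x.2.2, x.1.1 ^ (k : ℕ) * x.2.1 ^ (l : ℕ) := by
  unfold macM
  rw [← Finset.sum_filter]
  change ∑ sm ∈ (Fintype.piFinset fun _ : Fin 2 => Finset.Icc 1 n ×ˢ Finset.Icc 1 n) with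
    ((∀ i j : Fin 2, i < j → (sm i).1 < (sm j).1) ∧ n = ∑ i : Fin 2, (sm i).2 * (sm i).1),
     ∏ i : Fin 2, (sm i).2 ^ ([k, l].get i : ℕ) = _
  refine Finset.sum_nbij' (fun sm => (((sm 0).2, (sm 0).1), ((sm 1).2, (sm 1).1)))
    (fun x => ![(x.1.2, x.1.1), (x.2.2, x.2.1)]) ?_ ?_ ?_ ?_ ?_
  · intro sm h
    simp only [Finset.mem_filter, Fintype.mem_piFinset, Finset.mem_product, Finset.mem_Icc,
      mem_quads, Fin.sum_univ_two] at h ⊢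
    have h0 := h.1 0
    have h1 := h.1 1
    refine ⟨⟨⟨by omega, by omega, by omega, by omega⟩, h.2.2.symm⟩, h.2.1 0 1 (by decide)⟩
  · rintro ⟨⟨a, u⟩, b, v⟩ h
    simp only [quads, Finset.mem_filter, Fintype.mem_piFinset, Finset.mem_product, Finset.mem_Icc,
      Fin.sum_univ_two, Fin.forall_fin_two] at h ⊢
    simp
    omega
  · intro sm h
    funext i
    fin_cases i <;> rfl
  · intro x h
    rfl
  · intro sm h
    simp [Fin.prod_univ_two]

lemma sum_poly (m : ℕ) (hm : 0 < m) :
    12 * ∑ j ∈ Finset.Ico 1 m, ((2 * (j:ℤ)^3 - (j:ℤ)^2 * ((m - j : ℕ):ℤ)) -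
      (2 * (j:ℤ)^2 - (j:ℤ) * ((m - j : ℕ) : ℤ))) =
      5 * (m:ℤ)^4 - 18 * (m:ℤ)^3 + 19 * (m:ℤ)^2 - 6 * m := by
  have key : ∀ (M : ℤ) (k : ℕ), 12 * ∑ j ∈ Finset.Ico 1 (k+1), ((2 * (j:ℤ)^3 - (j:ℤ)^2 * (M - j)) -
      (2 * (j:ℤ)^2 - (j:ℤ) * (M - j))) =
       9 * (k:ℤ)^2 * (k+1)^2 - (2 * M + 6) * k * (k+1) * (2*k+1) + 6 * M * k * (k+1) := by
    intro M k
    induction k with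
    | zero => simp
    | succ k ih =>
      rw [Finset.sum_Ico_succ_top (by omega), mul_add, ih]
      push_cast; ring
  obtain ⟨k, rfl⟩ : ∃ k, m = k + 1 := ⟨m - 1, by omega⟩
  have := key (k+1) k
  rw [Finset.sum_congr rfl (g := fun j : ℕ => ((2 * (j:ℤ)^3 - (j:ℤ)^2 * ((k + 1 : ℤ) - j)) -
      (2 * (j:ℤ)^2 - (j:ℤ) * ((k + 1 : ℤ) - j)))), this]
  · push_cast; ring
  · intro j hj
    rw [Finset.mem_Ico] at hj
    rw [Nat.cast_sub hj.2.le]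
    push_cast; ring

/-- The prime detector. -/
def det (n : ℕ) : ℕ := ∑ d ∈ n.divisors, d * (d - 1) * (n - d)

lemma det_eq (n : ℕ) (hn : 0 < n) : 12 * (det n : ℤ) = 5 * macM [4] n - 18 * macM [3] n + 19 * macM [2] n
    - 6 * macM [1] n - 72 * macM [2, 1] n - 48 * macM [1, 2] n + 48 * macM [1, 1] n := by
  set Q : ℕ → ℕ → ℤ := fun a b => ((2 * (a:ℤ)^3 - (a:ℤ)^2 * b) - (2 * (a:ℤ)^2 - (a:ℤ) * b)) with hQ
  have h1 := (split_uv n Q).symm.trans (split_ab n Q)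
  rw [diag_ab, diag_uv] at h1
  have h2 : (det n : ℤ) = ∑ d ∈ n.divisors, Q d d * ((n / d : ℕ) - 1 : ℤ) := by
    unfold det
    push_cast
    refine Finset.sum_congr rfl fun d hd => ?_
    have hp := Nat.pos_of_mem_divisors hd
    have hle := Nat.divisor_le hd
    obtain ⟨e, rfl⟩ := Nat.dvd_of_mem_divisors hd
    rw [Nat.cast_sub hle, Nat.cast_sub hp, Nat.cast_mul]
    have : ((d:ℤ) * e) / d = e := Int.mul_ediv_cancel_left _ (by positivity)
    rw [this, hQ]
    push_cast; ring
  have h3 : 12 * ∑ m ∈ n.divisors, ∑ j ∈ Finset.Ico 1 m, Q j (m - j) =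
      5 * macM [4] n - 18 * macM [3] n + 19 * macM [2] n - 6 * macM [1] n := by
    rw [macM_one _ _ hn, macM_one _ _ hn, macM_one _ _ hn, macM_one _ _ hn]
    push_cast
    simp only [Finset.mul_sum, ← Finset.sum_sub_distrib, ← Finset.sum_add_distrib]
    refine Finset.sum_congr rfl fun m hm => ?_
    have := sum_poly m (Nat.pos_of_mem_divisors hm)
    rw [Finset.mul_sum] at this
    rw [hQ]
    convert this using 1
    norm_num
  have h4 : ∑ x ∈ quads n with x.1.2 < x.2.2,
        (Q (x.1.1 + x.2.1) x.2.1 + Q x.2.1 (x.1.1 + x.2.1)) -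
      ∑ x ∈ quads n with x.1.2 < x.2.2, (Q x.1.1 x.2.1 + Q x.2.1 x.1.1) =
      6 * macM [2, 1] n + 4 * macM [1, 2] n - 4 * macM [1, 1] n := by
    simp only [macM_two]
    push_cast
    simp only [Finset.mul_sum, ← Finset.sum_sub_distrib, ← Finset.sum_add_distrib]
    refine Finset.sum_congr rfl fun x hx => ?_
    rw [hQ]
    norm_num
    ring
  linarith

lemma det_zero_iff (n : ℕ) (hn : 2 ≤ n) : det n = 0 ↔ n.Prime := by
  unfold det
  rw [Finset.sum_eq_zero_iff, Nat.prime_def]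
  simp only [mul_eq_zero, Nat.mem_divisors]
  constructor
  · intro h
    refine ⟨hn, fun m hm => ?_⟩
    have h1 := h m ⟨hm, by omega⟩
    have h2 := Nat.le_of_dvd (by omega) hm
    have h3 := Nat.pos_of_dvd_of_pos hm (by omega)
    omega
  · rintro ⟨_, h⟩ d ⟨hd, _⟩
    rcases h d hd with rfl | rfl <;> simp

/-- Evaluate a formal combination of vectors. -/
noncomputable def evalM (α : List ℕ+ →₀ ℂ) (n : ℕ) : ℂ := α.sum fun v x => x * (macM v n : ℂ)

lemma evalM_add (α β : List ℕ+ →₀ ℂ) (n : ℕ) : evalM (α + β) n = evalM α n + evalM β n := by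
  unfold evalM
  exact Finsupp.sum_add_index' (by simp) (by intros; ring)

lemma evalM_single (v : List ℕ+) (x : ℂ) (n : ℕ) :
    evalM (Finsupp.single v x) n = x * (macM v n : ℂ) := by
  unfold evalM
  exact Finsupp.sum_single_index (by simp)

lemma exists_det : ∃ α : List ℕ+ →₀ ℂ, ∀ n : ℕ, 0 < n → evalM α n = (det n : ℂ) := by
  refine ⟨.single [4] (5/12) + .single [3] (-18/12) + .single [2] (19/12) + .single [1] (-6/12)
    + .single [2, 1] (-6) + .single [1, 2] (-4) + .single [1, 1] 4, fun n hn => ?_⟩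
  simp only [evalM_add, evalM_single]
  have h := congrArg (fun z : ℤ => (z : ℂ)) (det_eq n hn)
  push_cast at h
  linear_combination (-1/12) * h

lemma indicator_sum (t r n : ℕ) (ht : 2 ≤ t) (hrt : r < t) :
    ∑ s ∈ Finset.range t, (Complex.exp (2 * Real.pi * I / (t : ℂ)) ^ (s * (t - r)) / t) *
      Complex.exp (2 * Real.pi * I / (t : ℂ)) ^ (s * n) = if n % t = r % t then 1 else 0 := by
  have hz := Complex.isPrimitiveRoot_exp t (by omega)
  set z := Complex.exp (2 * Real.pi * I / (t : ℂ)) with hzdef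
  have ht0 : (t : ℂ) ≠ 0 := by exact_mod_cast (by omega : t ≠ 0)
  have e : ∀ s ∈ Finset.range t, (z ^ (s * (t - r)) / t) * z ^ (s * n) =
      (z ^ (n + (t - r))) ^ s / t := by
    intro s _
    rw [div_mul_eq_mul_div, ← pow_add, ← pow_mul]
    congr 2; ring
  rw [Finset.sum_congr rfl e, ← Finset.sum_div]
  have hiff : n % t = r % t ↔ t ∣ n + (t - r) := by
    have h1 : (n + (t - r)) + r = n + t := by omega
    constructor
    · intro h
      have : (n + (t - r)) + r ≡ 0 + r [MOD t] := by
        rw [h1, zero_add]; unfold Nat.ModEq; simpa using h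
      exact (Nat.modEq_zero_iff_dvd).1 (Nat.ModEq.add_right_cancel' r this)
    · intro h
      have := ((Nat.modEq_zero_iff_dvd).2 h).add_right r
      rw [h1, zero_add] at this
      unfold Nat.ModEq at this; simpa using this
  split_ifs with h
  · have : z ^ (n + (t - r)) = 1 := (hz.pow_eq_one_iff_dvd _).2 (hiff.1 h)
    rw [this]; simp [ht0]
  · have h1 : z ^ (n + (t - r)) ≠ 1 := fun h' => h (hiff.2 ((hz.pow_eq_one_iff_dvd _).1 h'))
    rw [geom_sum_eq h1, ← pow_mul, mul_comm, pow_mul, hz.pow_eq_one]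
    simp

lemma comb_form (t r : ℕ) (ht : 2 ≤ t) (hrt : r < t) (α β : List ℕ+ →₀ ℂ) :
    ∃ d : ℕ, 7 ≤ d ∧ ∃ (S : Finset (List ℕ+)) (c : List ℕ+ → ℕ → ℂ),
      (∀ v ∈ S, weight v ≤ d) ∧
      (∀ n : ℕ+, (if (n : ℕ) % t = r % t then evalM α n else evalM β n) =
        ∑ v ∈ S, ∑ s ∈ Finset.range t,
          c v s * Complex.exp (2 * Real.pi * I / (t : ℂ)) ^ (s * (n : ℕ)) *
            (macM v (n : ℕ) : ℂ)) := by
  classical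
  refine ⟨(α.support ∪ β.support).sup weight + 7, by omega, α.support ∪ β.support,
    fun v s => (Complex.exp (2 * Real.pi * I / (t : ℂ)) ^ (s * (t - r)) / t) * (α v - β v) +
      (if s = 0 then β v else 0), fun v hv => ?_, fun n => ?_⟩
  · have := Finset.le_sup (f := weight) hv
    omega
  · have h1 : ∀ v, ∑ s ∈ Finset.range t,
        ((Complex.exp (2 * Real.pi * I / (t : ℂ)) ^ (s * (t - r)) / t) * (α v - β v) +
          (if s = 0 then β v else 0)) * Complex.exp (2 * Real.pi * I / (t : ℂ)) ^ (s * (n : ℕ)) *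
            (macM v (n : ℕ) : ℂ) =
        ((if (n : ℕ) % t = r % t then 1 else 0) * (α v - β v) + β v) * (macM v (n : ℕ) : ℂ) := by
      intro v
      rw [← Finset.sum_mul]
      congr 1
      rw [← indicator_sum t r n ht hrt, Finset.sum_mul]
      simp only [add_mul, Finset.sum_add_distrib]
      congr 1
      · exact Finset.sum_congr rfl fun s _ => by ring
      · rw [Finset.sum_eq_single 0]
        · simp
        · intro b _ hb; simp [hb]
        · intro h; simp at h; omega
    simp only [h1]
    have hA : evalM α n = ∑ v ∈ α.support ∪ β.support, α v * (macM v n : ℂ) :=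
      Finsupp.sum_of_support_subset _ Finset.subset_union_left _ (by simp)
    have hB : evalM β n = ∑ v ∈ α.support ∪ β.support, β v * (macM v n : ℂ) :=
      Finsupp.sum_of_support_subset _ Finset.subset_union_right _ (by simp)
    split_ifs
    · rw [hA]; simp
    · rw [hB]; simp

open ArithmeticFunction in
lemma sigma_indep (t : ℕ) (ht : 2 ≤ t) (s : Finset ℕ) (g : ℕ → ℂ)
    (h : ∀ n : ℕ, 0 < n → ∑ i ∈ s, g i * (sigma (i + 1) (t * n) : ℂ) = 0) :
    ∀ i ∈ s, g i = 0 := by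
  classical
  set P : Polynomial ℂ := ∑ i ∈ s, Polynomial.C (g i * (sigma (i + 1) t : ℂ)) *
    (1 + Polynomial.X ^ (i + 1)) with hP
  have hP0 : P = 0 := by
    apply Polynomial.eq_zero_of_infinite_isRoot
    have hinf : Set.Infinite ((fun p : ℕ => (p : ℂ)) '' {p | p.Prime ∧ t < p}) := by
      refine Set.Infinite.image (Nat.cast_injective.injOn) ?_
      rw [Set.infinite_iff_exists_gt]
      intro a
      obtain ⟨p, hp1, hp2⟩ := Nat.exists_infinite_primes (max a t + 1)
      exact ⟨p, ⟨hp2, by omega⟩, by omega⟩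
    refine hinf.mono ?_
    rintro _ ⟨p, ⟨hp, htp⟩, rfl⟩
    have h1 := h p hp.pos
    have hc : Nat.Coprime t p :=
      (Nat.coprime_of_lt_prime (by omega) htp hp).symm
    simp only [Set.mem_ofPred_eq, Polynomial.IsRoot, hP, Polynomial.eval_finsetSum]
    rw [← h1]
    refine Finset.sum_congr rfl fun i _ => ?_
    have h2 : sigma (i + 1) p = 1 + p ^ (i + 1) := by
      rw [sigma_apply, hp.sum_divisors]; simp [add_comm]
    rw [isMultiplicative_sigma.map_mul_of_coprime hc, h2]
    simp; ring
  intro i hi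
  have h1 := congrArg (fun q => Polynomial.coeff q (i + 1)) hP0
  simp only [hP, Polynomial.finsetSum_coeff, Polynomial.coeff_C_mul, Polynomial.coeff_add,
    Polynomial.coeff_one, Polynomial.coeff_X_pow, Polynomial.coeff_zero] at h1
  rw [Finset.sum_eq_single i] at h1
  · have h2 : (sigma (i + 1) t : ℂ) ≠ 0 := by
      have : 0 < sigma (i + 1) t := sigma_pos _ _ (by omega)
      exact_mod_cast this.ne'
    simpa [h2] using h1
  · intro b _ hb
    simp [Ne.symm hb]
  · intro h; exact absurd hi h

theorem infinitely_many_prime_ap_detectors (t r : ℕ) (ht : 2 ≤ t) (hr : 0 < r)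
    (hrt : r < t) (hgcd : Nat.gcd r t = 1) :
    ∃ f : ℕ → (ℕ+ → ℂ),
      LinearIndependent ℂ f ∧
      ∀ i : ℕ, ∃ d : ℕ, 7 ≤ d ∧
        ∃ (S : Finset (List ℕ+)) (c : List ℕ+ → ℕ → ℂ),
          (∀ v ∈ S, weight v ≤ d) ∧
          (∀ n : ℕ+, f i n =
            ∑ v ∈ S, ∑ s ∈ Finset.range t,
              c v s * Complex.exp (2 * Real.pi * I / (t : ℂ)) ^ (s * (n : ℕ)) *
                (macM v (n : ℕ) : ℂ)) ∧
          (∀ n : ℕ+, ∃ x : ℝ, 0 ≤ x ∧ f i n = (x : ℂ)) ∧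
          (∀ n : ℕ+, 2 ≤ (n : ℕ) →
            (f i n = 0 ↔ (n : ℕ).Prime ∧ (n : ℕ) % t = r % t)) := by
  obtain ⟨α, hα⟩ := exists_det
  have hσ : ∀ i n : ℕ, 0 < n → evalM (Finsupp.single [i.succPNat] 1) n =
      (ArithmeticFunction.sigma (i + 1) n : ℂ) := by
    intro i n hn
    rw [evalM_single, macM_one _ _ hn, ArithmeticFunction.sigma_apply, one_mul]
    rfl
  refine ⟨fun i n => if (n : ℕ) % t = r % t then evalM α n else
    evalM (Finsupp.single [i.succPNat] 1) n, ?_, fun i => ?_⟩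
  · rw [linearIndependent_iff']
    intro s g hg
    refine sigma_indep t ht s g fun n hn => ?_
    have hpos : 0 < t * n := by positivity
    have h1 : (∑ i ∈ s, g i • fun m : ℕ+ => if (m : ℕ) % t = r % t then evalM α m else
        evalM (Finsupp.single [i.succPNat] 1) m) ((t * n).toPNat hpos) = 0 := by
      rw [hg]; rfl
    rw [Finset.sum_apply] at h1
    simp only [Pi.smul_apply, smul_eq_mul] at h1
    rw [← h1]
    refine Finset.sum_congr rfl fun i _ => ?_
    change _ = g i * (if t * n % t = r % t then evalM α (t * n) else
      evalM (Finsupp.single [i.succPNat] 1) (t * n))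
    rw [if_neg, hσ _ _ hpos]
    rw [Nat.mul_mod_right, Nat.mod_eq_of_lt hrt]
    omega
  · obtain ⟨d, hd, S, c, hS, hc⟩ := comb_form t r ht hrt α (Finsupp.single [i.succPNat] 1)
    refine ⟨d, hd, S, c, hS, hc, fun n => ?_, fun n hn => ?_⟩
    · beta_reduce
      rw [hα _ n.pos, hσ _ _ n.pos]
      split_ifs
      · exact ⟨(det n : ℝ), by positivity, by push_cast; rfl⟩
      · exact ⟨(ArithmeticFunction.sigma (i + 1) n : ℝ), by positivity, by push_cast; rfl⟩
    · beta_reduce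
      rw [hα _ n.pos, hσ _ _ n.pos]
      split_ifs with h
      · rw [Nat.cast_eq_zero, det_zero_iff _ hn]
        simp [h]
      · have : 0 < ArithmeticFunction.sigma (i + 1) (n : ℕ) :=
          ArithmeticFunction.sigma_pos _ _ (by omega)
        simp only [Nat.cast_eq_zero, h, and_false, iff_false]
        exact this.ne'
end
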